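/- arXiv:0712.0405 — 2 statements merged into one kernel-verified Lean document; each statement's English description precedes it below -/
import Mathlib

section
/- If π: C → B is a surjective Hopf algebra morphism between finite-dimensional Hopf algebras and A = C^{co π} (the coinvariants) is a Hopf subalgebra of C, then dim C = dim A · dim B and the sequence A ↪ C ↠ B is exact (in particular ker π = A⁺C). -/
/-!
The hard part is the dimension formula `dim C = dim C^{co π} · dim B`, which holds for every
surjection `π : C → B` of finite-dimensional Hopf algebras (`finrank_eq_mul_coinv`). The usual route
passes through freeness or integrals; the argument here is a counting argument over the convolution
algebra `R = B^*`, which acts on `X = C` through the right `B`-comodule structure of `C`.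

Let `l` be the maximum of `dim Hom_R(V, X) / dim V` over nonzero cyclic modules. Left exactness of
`Hom_R(-, X)` extends the bound `dim Hom_R(V, X) ≤ l · dim V` to all finite-dimensional `V`, and
shows that the modules attaining equality, called tight, are closed under submodules and quotients
(`tight_of_exact`).

If `V` is tight, then so is `C ⊗ V` with the twisted action `a (c ⊗ v) = Σ c₁ ⊗ (π(c₂) ⇀ a) v`,
since each linear map `L : C → Hom_R(V, X)` yields a homomorphism `c ⊗ v ↦ Σ L(c₁)(v) c₂`, from
which the antipode recovers `L` (`homDim_twist`). Its quotient `B ⊗ V` contains a nonzero invariant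
vector built from the antipode of `B` (`exists_invariant`). Hence the trivial module `k` is tight,
and `l = dim Hom_R(k, X) ≤ dim C^{co π}`. In the other direction, injectivity of the Galois map
`c ⊗ x ↦ c x₁ ⊗ x₂` gives `dim C^{co π} · dim C ≤ dim Hom_R(C^*, X) ≤ l · dim C`
(`le_homDim_W`). So `l = dim C^{co π}` and `C^*` is tight; so is its submodule `R`, and
`dim C = dim Hom_R(R, X) = l · dim B`.

For exactness, the coinvariants are stable under the left adjoint action (`adjoint_mem_coinv`),
which makes `A⁺C` a two-sided ideal, and then a Hopf ideal (`isHopfIdeal`). The map `π` factors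
through `q : C → C ⧸ A⁺C`, and the coinvariants of `q` are again `A`. By the dimension formula for
both maps, `C ⧸ A⁺C` and `B` have the same dimension, so `C ⧸ A⁺C → B` is bijective and
`ker π = A⁺C`.
-/

open TensorProduct

/-- A submodule `C` of a coalgebra is a subcoalgebra if `Δ(C) ⊆ C ⊗ C`. -/
def IsSubcoalgebra (k : Type*) [CommRing k] {H : Type*} [AddCommGroup H] [Module k H]
    [Coalgebra k H] (C : Submodule k H) : Prop :=
  ∀ c ∈ C, Coalgebra.comul (R := k) c ∈ LinearMap.range (TensorProduct.map C.subtype C.subtype)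

namespace HopfCoinv

/-! ### Modules attaining the maximal ratio `dim Hom(V, X) / dim V` -/

section Abstract

variable (k : Type*) [Field k] (R : Type*) [Ring R] [Algebra k R]
variable (X : Type*) [AddCommGroup X] [Module k X] [Module R X] [IsScalarTower k R X]

/-- `dim_k V`, as a rational number. -/
noncomputable def dimQ (V : Type*) [AddCommGroup V] [Module k V] : ℚ :=
  (Module.finrank k V : ℚ)

/-- `dim_k Hom_R(V, X)`, as a rational number. -/
noncomputable def homDim (V : Type*) [AddCommGroup V] [Module R V] : ℚ :=
  (Module.finrank k (V →ₗ[R] X) : ℚ)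

/-- `Hom_R(V, X)` embeds into `Hom_k(V, X)`, so it is finite-dimensional. -/
instance finite_hom [FiniteDimensional k X] (V : Type*) [AddCommGroup V] [Module k V]
    [Module R V] [IsScalarTower k R V] [FiniteDimensional k V] :
    Module.Finite k (V →ₗ[R] X) := by
  let e : (V →ₗ[R] X) →ₗ[k] (V →ₗ[k] X) :=
    { toFun := fun T => T.restrictScalars k
      map_add' := fun _ _ => rfl
      map_smul' := fun _ _ => rfl }
  exact Module.Finite.of_injective e (LinearMap.restrictScalars_injective k)

variable {R}
variable {V : Type*} [AddCommGroup V] [Module k V] [Module R V] [IsScalarTower k R V]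
  [FiniteDimensional k V]
variable {U : Type*} [AddCommGroup U] [Module k U] [Module R U] [IsScalarTower k R U]
  [FiniteDimensional k U]
variable {Q : Type*} [AddCommGroup Q] [Module k Q] [Module R Q] [IsScalarTower k R Q]
  [FiniteDimensional k Q]

omit [FiniteDimensional k U] [FiniteDimensional k Q] in
theorem dimQ_exact (i : U →ₗ[R] V) (p : V →ₗ[R] Q) (hi : Function.Injective i)
    (hp : Function.Surjective p) (hip : LinearMap.range i = LinearMap.ker p) :
    dimQ k V = dimQ k U + dimQ k Q := by
  have h := (p.restrictScalars k).finrank_range_add_finrank_ker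
  rw [LinearMap.range_eq_top.2 (by exact hp), finrank_top] at h
  have h2 : LinearMap.ker (p.restrictScalars k) = LinearMap.range (i.restrictScalars k) := by
    ext v
    have := SetLike.ext_iff.1 hip v
    simpa using this.symm
  rw [h2, LinearMap.finrank_range_of_inj (by exact hi)] at h
  unfold dimQ
  rw [← h]; push_cast; ring

/-- Left exactness of `Hom_R(-, X)` makes `homDim` subadditive on short exact sequences. -/
theorem homDim_le [FiniteDimensional k X] (i : U →ₗ[R] V) (p : V →ₗ[R] Q)
    (hp : Function.Surjective p) (hip : LinearMap.range i = LinearMap.ker p) :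
    homDim k R X V ≤ homDim k R X U + homDim k R X Q := by
  let r : (V →ₗ[R] X) →ₗ[k] (U →ₗ[R] X) :=
    { toFun := fun T => T ∘ₗ i
      map_add' := fun _ _ => rfl
      map_smul' := fun _ _ => rfl }
  let q : (Q →ₗ[R] X) →ₗ[k] (V →ₗ[R] X) :=
    { toFun := fun T => T ∘ₗ p
      map_add' := fun _ _ => rfl
      map_smul' := fun _ _ => rfl }
  have h := r.finrank_range_add_finrank_ker
  have h1 : Module.finrank k (LinearMap.range r) ≤ Module.finrank k (U →ₗ[R] X) :=
    Submodule.finrank_le _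
  have hle : LinearMap.ker r ≤ LinearMap.range q := by
    intro T hT
    have hT' : LinearMap.ker p ≤ LinearMap.ker T := by
      rw [← hip]
      rintro _ ⟨u, rfl⟩
      exact LinearMap.congr_fun (show T ∘ₗ i = 0 from hT) u
    refine ⟨(LinearMap.ker p).liftQ T hT' ∘ₗ
      (p.quotKerEquivOfSurjective hp).symm.toLinearMap, ?_⟩
    ext v
    have : (p.quotKerEquivOfSurjective hp).symm (p v) = Submodule.Quotient.mk v := by
      rw [LinearEquiv.symm_apply_eq]; rfl
    change (LinearMap.ker p).liftQ T hT' ((p.quotKerEquivOfSurjective hp).symm (p v)) = T v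
    rw [this]; rfl
  have h2 : Module.finrank k (LinearMap.ker r) ≤ Module.finrank k (Q →ₗ[R] X) :=
    (Submodule.finrank_mono hle).trans (LinearMap.finrank_range_le q)
  unfold homDim
  have : Module.finrank k (V →ₗ[R] X) ≤
      Module.finrank k (U →ₗ[R] X) + Module.finrank k (Q →ₗ[R] X) := by omega
  exact_mod_cast this

variable (R) in
theorem homDim_self : homDim k R X R = dimQ k X := by
  unfold homDim dimQ
  rw [(LinearMap.ringLmapEquivSelf R k X).finrank_eq]

theorem homDim_le_mul [FiniteDimensional k X] :
    homDim k R X V ≤ dimQ k V * dimQ k X := by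
  let e : (V →ₗ[R] X) →ₗ[k] (V →ₗ[k] X) :=
    { toFun := fun T => T.restrictScalars k
      map_add' := fun _ _ => rfl
      map_smul' := fun _ _ => rfl }
  have := LinearMap.finrank_le_finrank_of_injective (R := k) (f := e)
    (LinearMap.restrictScalars_injective k)
  rw [Module.finrank_linearMap k k V X] at this
  unfold homDim dimQ
  exact_mod_cast this

variable (R)

/-- `l` is the largest value of `dim Hom_R(V, X) / dim V` over nonzero cyclic modules
`R ⧸ I`. The bound is written as a product, which makes it trivially true at `I = ⊤`. -/
def IsMaxRatio (l : ℚ) : Prop :=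
  (∀ I : Ideal R, homDim k R X (R ⧸ I) ≤ l * dimQ k (R ⧸ I)) ∧
    ∃ I : Ideal R, I ≠ ⊤ ∧ homDim k R X (R ⧸ I) = l * dimQ k (R ⧸ I)

/-- The ratios take finitely many values, since `dim Hom_R(R ⧸ I, X)` and `dim R ⧸ I`
are bounded. -/
theorem exists_isMaxRatio [FiniteDimensional k X] [FiniteDimensional k R] [Nontrivial R] :
    ∃ l, IsMaxRatio k R X l := by
  let N := Module.finrank k R * Module.finrank k X
  let ratio : {I : Ideal R // I ≠ ⊤} → ℚ := fun I =>
    homDim k R X (R ⧸ I.1) / dimQ k (R ⧸ I.1)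
  have hle : ∀ I : Ideal R, Module.finrank k (R ⧸ I) ≤ Module.finrank k R := fun I =>
    LinearMap.finrank_le_finrank_of_surjective (R := k) (f := (I.mkQ).restrictScalars k)
      (by exact I.mkQ_surjective)
  have hfin : (Set.range ratio).Finite := by
    refine (((Finset.range (N + 1)) ×ˢ (Finset.range (Module.finrank k R + 1))).image
      (fun x : ℕ × ℕ => (x.1 : ℚ) / x.2)).finite_toSet.subset ?_
    rintro _ ⟨I, rfl⟩
    simp only [Finset.coe_image, Set.mem_image, Finset.mem_coe, Finset.mem_product,
      Finset.mem_range]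
    refine ⟨(Module.finrank k ((R ⧸ I.1) →ₗ[R] X), Module.finrank k (R ⧸ I.1)), ⟨?_, ?_⟩, rfl⟩
    · have h1 := homDim_le_mul k X (R := R) (V := R ⧸ I.1)
      unfold homDim dimQ at h1
      have h2 : Module.finrank k ((R ⧸ I.1) →ₗ[R] X) ≤
        Module.finrank k (R ⧸ I.1) * Module.finrank k X := by exact_mod_cast h1
      exact Nat.lt_succ_of_le (h2.trans (Nat.mul_le_mul_right _ (hle _)))
    · exact Nat.lt_succ_of_le (hle _)
  have hne : (Set.range ratio).Nonempty := ⟨_, ⟨⊥, bot_ne_top⟩, rfl⟩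
  obtain ⟨_, ⟨⟨I, hI⟩, rfl⟩, hmax⟩ := hfin.exists_maximal hne
  have hpos : ∀ J : Ideal R, J ≠ ⊤ → 0 < dimQ k (R ⧸ J) := by
    intro J hJ
    have : Nontrivial (R ⧸ J) := Submodule.Quotient.nontrivial_iff.2 hJ
    unfold dimQ
    exact_mod_cast Module.finrank_pos
  refine ⟨ratio ⟨I, hI⟩, fun J => ?_, I, hI, ?_⟩
  · by_cases hJ : J = ⊤
    · subst hJ
      have h1 := homDim_le_mul k X (R := R) (V := R ⧸ (⊤ : Ideal R))
      have h2 : dimQ k (R ⧸ (⊤ : Ideal R)) = 0 := by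
        unfold dimQ
        have : Subsingleton (R ⧸ (⊤ : Ideal R)) := Submodule.Quotient.subsingleton_iff.2 rfl
        exact_mod_cast Module.finrank_zero_of_subsingleton
      rw [h2] at h1 ⊢
      simpa using h1
    · have h3 : ratio ⟨J, hJ⟩ ≤ ratio ⟨I, hI⟩ := by
        rcases le_total (ratio ⟨J, hJ⟩) (ratio ⟨I, hI⟩) with h | h
        · exact h
        · exact hmax ⟨_, rfl⟩ h
      exact (div_le_iff₀ (hpos J hJ)).1 h3
  · exact (div_mul_cancel₀ _ (hpos I hI).ne').symm

variable {R}

/-- The bound for cyclic modules propagates to all finite-dimensional modules, by induction on the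
dimension: a nonzero module has a nonzero cyclic submodule. -/
theorem homDim_le_of_isMaxRatio [FiniteDimensional k X] [FiniteDimensional k R] {l : ℚ}
    (hl : IsMaxRatio k R X l) : homDim k R X V ≤ l * dimQ k V := by
  obtain ⟨n, hn⟩ : ∃ n, Module.finrank k V = n := ⟨_, rfl⟩
  induction n using Nat.strong_induction_on generalizing V with
  | _ n ih =>
    rcases subsingleton_or_nontrivial V with hV | hV
    · have h1 := homDim_le_mul k X (R := R) (V := V)
      have h2 : dimQ k V = 0 := by
        unfold dimQ
        exact_mod_cast Module.finrank_zero_of_subsingleton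
      rw [h2] at h1 ⊢
      simpa using h1
    obtain ⟨v, hv⟩ := exists_ne (0 : V)
    let s := LinearMap.toSpanSingleton R V v
    let I : Ideal R := LinearMap.ker s
    let i : (R ⧸ I) →ₗ[R] V := I.liftQ s le_rfl
    have hi : Function.Injective i := LinearMap.ker_eq_bot.1 (Submodule.ker_liftQ_eq_bot' _ _ rfl)
    have hi0 : i (Submodule.Quotient.mk 1) = v := by simp [i, s]
    let p := (LinearMap.range i).mkQ
    have hp : Function.Surjective p := Submodule.mkQ_surjective _
    have hip : LinearMap.range i = LinearMap.ker p := (Submodule.ker_mkQ _).symm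
    have h1 := homDim_le k X i p hp hip
    have h2 := dimQ_exact k i p hi hp hip
    have h3 : 0 < dimQ k (R ⧸ I) := by
      have : Nontrivial (R ⧸ I) := by
        refine ⟨⟨Submodule.Quotient.mk 1, 0, fun h => hv ?_⟩⟩
        rw [← hi0, h, map_zero]
      unfold dimQ
      exact_mod_cast Module.finrank_pos
    have h4 : Module.finrank k (V ⧸ LinearMap.range i) < n := by
      rw [← hn]
      unfold dimQ at h2 h3
      have : (Module.finrank k (V ⧸ LinearMap.range i) : ℚ) < Module.finrank k V := by linarith
      exact_mod_cast this
    have h5 := ih _ h4 (V := V ⧸ LinearMap.range i) rfl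
    have h6 := hl.1 I
    rw [h2]
    linarith

variable {X} in
/-- Modules attaining the maximal ratio (called tight below) are stable under submodules and
quotients: both terms of a subadditive inequality that is an equality must attain their bounds. -/
theorem tight_of_exact [FiniteDimensional k X] [FiniteDimensional k R] {l : ℚ}
    (hl : IsMaxRatio k R X l) (i : U →ₗ[R] V) (p : V →ₗ[R] Q) (hi : Function.Injective i)
    (hp : Function.Surjective p) (hip : LinearMap.range i = LinearMap.ker p)
    (hV : l * dimQ k V ≤ homDim k R X V) :
    l * dimQ k U ≤ homDim k R X U ∧ l * dimQ k Q ≤ homDim k R X Q := by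
  have h1 := homDim_le k X i p hp hip
  have h2 := dimQ_exact k i p hi hp hip
  have h3 := homDim_le_of_isMaxRatio k X (V := U) hl
  have h4 := homDim_le_of_isMaxRatio k X (V := Q) hl
  rw [h2] at hV
  constructor <;> linarith

variable {X} in
theorem tight_sub [FiniteDimensional k X] [FiniteDimensional k R] {l : ℚ}
    (hl : IsMaxRatio k R X l) (i : U →ₗ[R] V) (hi : Function.Injective i)
    (hV : l * dimQ k V ≤ homDim k R X V) : l * dimQ k U ≤ homDim k R X U :=
  (tight_of_exact k hl i (LinearMap.range i).mkQ hi (Submodule.mkQ_surjective _)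
    (Submodule.ker_mkQ _).symm hV).1

variable {X} in
theorem tight_quot [FiniteDimensional k X] [FiniteDimensional k R] {l : ℚ}
    (hl : IsMaxRatio k R X l) (p : V →ₗ[R] Q) (hp : Function.Surjective p)
    (hV : l * dimQ k V ≤ homDim k R X V) : l * dimQ k Q ≤ homDim k R X Q :=
  haveI : FiniteDimensional k (LinearMap.ker p) :=
    inferInstanceAs (FiniteDimensional k ((LinearMap.ker p).restrictScalars k))
  (tight_of_exact k hl (LinearMap.ker p).subtype p (Submodule.subtype_injective _) hp
    (Submodule.range_subtype _) hV).2

end Abstract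

/-! ### Identities in Sweedler notation -/

open Coalgebra WithConv HopfAlgebra

section Sweedler

variable {k : Type*} [Field k] {C : Type*} [AddCommGroup C] [Module k C] [Coalgebra k C]

/-- Coassociativity, fed to a trilinear map. -/
theorem coassoc_sum {M : Type*} [AddCommGroup M] [Module k M] {ι : Type*} {κ Λ : ι → Type*}
    (F : C →ₗ[k] C →ₗ[k] C →ₗ[k] M) {c : C} (r : Repr k c ι)
    (r₁ : ∀ i, Repr k (r.left i) (κ i)) (r₂ : ∀ i, Repr k (r.right i) (Λ i)) :
    ∑ i ∈ r.index, ∑ j ∈ (r₁ i).index, F ((r₁ i).left j) ((r₁ i).right j) (r.right i) =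
      ∑ i ∈ r.index, ∑ j ∈ (r₂ i).index, F (r.left i) ((r₂ i).left j) ((r₂ i).right j) := by
  have h := congrArg (TensorProduct.lift ((TensorProduct.uncurry (.id k) C C M).comp F))
    (sum_tmul_tmul_eq r r₁ r₂)
  simpa using h

theorem sum_smul_counit {ι : Type*} {c : C} (r : Repr k c ι) :
    ∑ i ∈ r.index, counit (R := k) (r.right i) • r.left i = c := by
  have h := congrArg (TensorProduct.rid k C) (sum_tmul_counit_eq r)
  simpa only [map_sum, TensorProduct.rid_tmul, one_smul] using h

/-- Functionals on the second factor separate the points of a tensor product. -/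
theorem tmul_sep {M N : Type*} [AddCommGroup M] [Module k M] [AddCommGroup N] [Module k N]
    (t : M ⊗[k] N)
    (h : ∀ φ : N →ₗ[k] k, TensorProduct.rid k M (LinearMap.lTensor M φ t) = 0) : t = 0 := by
  let b := Module.Free.chooseBasis k N
  have key : ∀ (t : M ⊗[k] N) j, TensorProduct.equivFinsuppOfBasisRight (M := M) b t j =
      TensorProduct.rid k M (LinearMap.lTensor M (b.coord j) t) := by
    intro t j
    induction t with
    | zero => simp
    | add x y hx hy => simp [hx, hy]
    | tmul x y => simp
  apply (TensorProduct.equivFinsuppOfBasisRight (M := M) b).injective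
  ext j
  rw [key, h]; simp

end Sweedler

section Antipode

variable {k : Type*} [Field k] {C : Type*} [Ring C] [HopfAlgebra k C]

/-- `(S z₁ ⊗ 1) Δ(z₂) = 1 ⊗ z`, in Sweedler notation. -/
theorem sum_antipode_tmul_mul_comul (z : C) :
    ∑ i ∈ (ℛ k z).index, (antipode k ((ℛ k z).left i) ⊗ₜ[k] (1 : C)) *
      comul (R := k) ((ℛ k z).right i) = 1 ⊗ₜ z := by
  let F : C →ₗ[k] C →ₗ[k] C →ₗ[k] C ⊗[k] C :=
    LinearMap.mk₂ k (fun x y => TensorProduct.mk k C C (antipode k x * y))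
      (by intros; ext; simp [add_mul]) (by intros; ext; simp [smul_tmul'])
      (by intros; ext; simp [mul_add]) (by intros; ext; simp [smul_tmul'])
  have h := coassoc_sum F (ℛ k z) (fun i => ℛ k _) (fun i => ℛ k _)
  simp only [F, LinearMap.mk₂_apply, TensorProduct.mk_apply] at h
  calc _ = ∑ i ∈ (ℛ k z).index, ∑ j ∈ (ℛ k ((ℛ k z).right i)).index,
      (antipode k ((ℛ k z).left i) * (ℛ k ((ℛ k z).right i)).left j) ⊗ₜ[k]
        (ℛ k ((ℛ k z).right i)).right j := by
        refine Finset.sum_congr rfl fun i _ => ?_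
        conv_lhs => rw [← (ℛ k ((ℛ k z).right i)).eq]
        simp [Finset.mul_sum]
    _ = _ := by
        rw [← h]
        simp only [← TensorProduct.sum_tmul, sum_antipode_mul_eq_smul]
        simp only [TensorProduct.smul_tmul, ← TensorProduct.tmul_sum, sum_counit_smul]

/-- The identity `(1 ⊗ y₁) Δ(S y₂) = S y ⊗ 1`, a form of the anti-comultiplicativity of `S`. -/
theorem sum_tmul_mul_comul_antipode (y : C) :
    ∑ i ∈ (ℛ k y).index, ((1 : C) ⊗ₜ[k] (ℛ k y).left i) *
      comul (R := k) (antipode k ((ℛ k y).right i)) = antipode k y ⊗ₜ 1 := by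
  let F : C →ₗ[k] C →ₗ[k] C →ₗ[k] C ⊗[k] C :=
    LinearMap.mk₂ k (fun x y => (LinearMap.mulLeft k
        ((antipode k x ⊗ₜ[k] (1 : C)) * comul (R := k) y)) ∘ₗ comul ∘ₗ antipode k)
      (by intros; ext; simp [add_mul, add_tmul, mul_assoc])
      (by intros; ext; simp [← smul_tmul', mul_assoc])
      (by intros; ext; simp [mul_add, add_mul, mul_assoc]) (by intros; ext; simp [mul_assoc])
  have h := coassoc_sum F (ℛ k y) (fun i => ℛ k _) (fun i => ℛ k _)
  simp only [F, LinearMap.mk₂_apply, LinearMap.comp_apply, LinearMap.mulLeft_apply] at h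
  simp only [← Finset.sum_mul, sum_antipode_tmul_mul_comul] at h
  rw [h]
  simp only [mul_assoc, ← Finset.mul_sum, ← Bialgebra.comul_mul, ← map_sum,
    sum_mul_antipode_eq_smul]
  simp only [map_smul, Bialgebra.comul_one, mul_smul_comm, mul_one]
  simp only [smul_tmul', ← TensorProduct.sum_tmul, ← map_smul, ← map_sum, sum_smul_counit]

end Antipode

/-! ### The dual algebra and its modules -/

section Dual

variable (k : Type*) [Field k] (B : Type*) [AddCommGroup B] [Module k B] [Coalgebra k B]

/-- The dual algebra `B^*` of a coalgebra: linear functionals under convolution. -/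
abbrev Dual := WithConv (B →ₗ[k] k)

instance [FiniteDimensional k B] : FiniteDimensional k (Dual k B) :=
  Module.Finite.equiv (WithConv.linearEquiv k (B →ₗ[k] k)).symm

omit [Coalgebra k B] in
theorem finrank_dual [FiniteDimensional k B] :
    Module.finrank k (Dual k B) = Module.finrank k B := by
  rw [(WithConv.linearEquiv k (B →ₗ[k] k)).finrank_eq, Subspace.dual_finrank_eq]

omit [Coalgebra k B] in
variable {k B} in
theorem dual_sum_apply {ι : Type*} (s : Finset ι) (f : ι → Dual k B) (x : B) :
    (∑ i ∈ s, f i) x = ∑ i ∈ s, f i x := by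
  have h := map_sum (WithConv.linearEquiv k (B →ₗ[k] k)) f s
  exact (LinearMap.congr_fun h x).trans (LinearMap.sum_apply _ _ _)

end Dual

section RM

variable {k : Type*} [Field k] {R : Type*} [Ring R] [Algebra k R]
  {M : Type*} [AddCommGroup M] [Module k M]

/-- The space `M` regarded as an `R`-module through the representation `ρ`; a type synonym, so that
one space can carry several actions. -/
def RM (_ : R →ₐ[k] Module.End k M) : Type _ := M

variable (ρ : R →ₐ[k] Module.End k M)

instance : AddCommGroup (RM ρ) := inferInstanceAs (AddCommGroup M)
instance : Module k (RM ρ) := inferInstanceAs (Module k M)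
instance [h : FiniteDimensional k M] : FiniteDimensional k (RM ρ) := h
noncomputable instance : Module R (RM ρ) :=
  letI : Module (Module.End k M) (RM ρ) := inferInstanceAs (Module (Module.End k M) M)
  Module.compHom _ ρ.toRingHom

theorem RM.smul_eq (a : R) (x : RM ρ) : a • x = (ρ a : M →ₗ[k] M) x := rfl

instance : IsScalarTower k R (RM ρ) where
  smul_assoc t a x := by
    rw [RM.smul_eq, RM.smul_eq, map_smul]; rfl

theorem dimQ_RM : dimQ k (RM ρ) = dimQ k M := rfl

/-- Build an `R`-linear map out of a `k`-linear one. -/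
def mkHom {V X : Type*} [AddCommGroup V] [Module k V] [Module R V]
    [AddCommGroup X] [Module k X] [Module R X] (f : V →ₗ[k] X)
    (h : ∀ (a : R) v, f (a • v) = a • f v) : V →ₗ[R] X :=
  { toFun := f, map_add' := map_add f, map_smul' := h }

end RM

section Hit

variable {k : Type*} [Field k] {B : Type*} [Ring B] [HopfAlgebra k B]

/-- The action of `B` on its dual by translations: `(b ⇀ a)(x) = a(x b)`. -/
noncomputable def hit : B →ₗ[k] Dual k B →ₗ[k] Dual k B :=
  LinearMap.mk₂ k (fun b a => toConv (a.ofConv ∘ₗ LinearMap.mulRight k b))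
    (by intros; ext; simp [mul_add]) (by intros; ext; simp)
    (by intros; ext; simp) (by intros; ext; simp)

theorem hit_apply (b : B) (a : Dual k B) (x : B) : hit b a x = a (x * b) := rfl

theorem hit_one (b : B) : hit b (1 : Dual k B) = counit (R := k) b • (1 : Dual k B) := by
  ext x
  change (1 : Dual k B) (x * b) = counit (R := k) b • (1 : Dual k B) x
  simp [mul_comm]

/-- `b ⇀ (p q) = Σ (b₁ ⇀ p)(b₂ ⇀ q)`: the dual of `B` is a `B`-module algebra. -/
theorem hit_mul {ι : Type*} {b : B} (r : Repr k b ι) (a a' : Dual k B) :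
    hit b (a * a') = ∑ i ∈ r.index, hit (r.left i) a * hit (r.right i) a' := by
  ext x
  have h := (Repr.mul (ℛ k x) r).convMul_apply a a'
  change (a * a') (x * b) = (∑ i ∈ r.index, hit (r.left i) a * hit (r.right i) a' : Dual k B) x
  rw [h]
  rw [dual_sum_apply]
  simp only [(ℛ k x).convMul_apply, hit_apply]
  rw [Finset.sum_comm]
  simp [Finset.sum_product]

end Hit

section Reps

variable {k : Type*} [Field k] {C : Type*} [Ring C] [HopfAlgebra k C]
  {B : Type*} [Ring B] [HopfAlgebra k B] (π : C →ₐc[k] B)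

/-- The action of the dual of `B` on `C` coming from the `B`-comodule structure of `C`:
`a • c = Σ a(π(c₂)) c₁`. -/
noncomputable def actX : Dual k B →ₗ[k] Module.End k C :=
  { toFun := fun a => (TensorProduct.rid k C).toLinearMap ∘ₗ
      LinearMap.lTensor C (a.ofConv ∘ₗ π.toLinearMap) ∘ₗ comul
    map_add' := by intro a b; ext; simp [LinearMap.add_comp, LinearMap.lTensor_add]
    map_smul' := by intro a b; ext; simp [LinearMap.smul_comp, LinearMap.lTensor_smul] }

theorem actX_apply {ι : Type*} {c : C} (r : Repr k c ι) (a : Dual k B) :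
    actX π a c = ∑ i ∈ r.index, a (π (r.right i)) • r.left i := by
  simp [actX, ← r.eq]; rfl

theorem actX_eq (c : C) (a : Dual k B) :
    actX π a c = TensorProduct.rid k C (LinearMap.lTensor C a.ofConv
      (TensorProduct.map LinearMap.id π.toLinearMap (comul c))) := by
  rw [actX_apply π (ℛ k c), ← (ℛ k c).eq]
  simp; rfl

/-- `actX` as a representation: its multiplicativity is the coassociativity of `C`. -/
noncomputable def repX : Dual k B →ₐ[k] Module.End k C :=
  AlgHom.ofLinearMap (actX π)
    (by
      ext c
      rw [actX_apply π (ℛ k c)]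
      simpa using sum_smul_counit (ℛ k c))
    (by
      intro a a'
      ext c
      rw [Module.End.mul_apply, actX_apply π (ℛ k c), actX_apply π (ℛ k c), map_sum]
      let F : C →ₗ[k] C →ₗ[k] C →ₗ[k] C := LinearMap.mk₂ k (fun x y =>
        (LinearMap.toSpanSingleton k C (a (π y) • x)) ∘ₗ a'.ofConv ∘ₗ π.toLinearMap)
        (by intros; ext; simp) (by intros; ext; simp [smul_smul, mul_comm, mul_left_comm])
        (by intros; ext; simp [add_smul])
        (by intros; ext; simp [smul_smul, mul_comm, mul_left_comm])
      have h := coassoc_sum F (ℛ k c) (fun i => ℛ k _) (fun i => ℛ k _)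
      simp only [F, LinearMap.mk₂_apply, LinearMap.comp_apply,
        LinearMap.toSpanSingleton_apply] at h
      calc _ = _ := ?_
        _ = _ := h.symm
        _ = _ := ?_
      · refine Finset.sum_congr rfl fun i _ => ?_
        rw [((ℛ k ((ℛ k c).right i)).induced π).convMul_apply, Finset.sum_smul]
        refine Finset.sum_congr rfl fun j _ => ?_
        simp only [smul_smul, mul_comm]; rfl
      · refine Finset.sum_congr rfl fun i _ => ?_
        rw [map_smul, actX_apply π (ℛ k _), Finset.smul_sum]
        rfl)

end Reps

section Reps

variable {k : Type*} [Field k] {C : Type*} [Ring C] [HopfAlgebra k C]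
  {B : Type*} [Ring B] [HopfAlgebra k B] (π : C →ₐc[k] B)

/-- The action on a product: `a • (x y) = Σ ((π(y₂) ⇀ a) • x) y₁`. -/
theorem smul_actX {ι : Type*} {y : C} (r : Repr k y ι) (a : Dual k B) (x : C) :
    repX π a (x * y) = ∑ i ∈ r.index, repX π (hit (π (r.right i)) a) x * r.left i := by
  change actX π a _ = ∑ i ∈ r.index, actX π (hit (π (r.right i)) a) x * r.left i
  rw [actX_apply π (Repr.mul (ℛ k x) r)]
  simp only [actX_apply π (ℛ k x), hit_apply, Finset.sum_mul]
  rw [Finset.sum_comm]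
  simp [Finset.sum_product]

variable (V : Type*) [AddCommGroup V] [Module k V] [Module (Dual k B) V]
  [IsScalarTower k (Dual k B) V]

/-- The linear map underlying the twisted action `repT` on `C ⊗ V`. -/
noncomputable def actT : Dual k B →ₗ[k] Module.End k (C ⊗[k] V) :=
  { toFun := fun a => TensorProduct.lift (LinearMap.mk₂ k (fun c v =>
      LinearMap.lTensor C ((Algebra.lsmul k k V).toLinearMap.flip v ∘ₗ hit.flip a ∘ₗ π.toLinearMap)
        (comul c))
      (by intros; simp) (by intros; simp)
      (by intros; simp [LinearMap.add_comp, LinearMap.lTensor_add])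
      (by intros; simp [LinearMap.smul_comp, LinearMap.lTensor_smul]))
    map_add' := by
      intro a b
      refine TensorProduct.ext' fun c v => ?_
      simp [LinearMap.add_comp, LinearMap.comp_add, LinearMap.lTensor_add]
    map_smul' := by
      intro a b
      refine TensorProduct.ext' fun c v => ?_
      simp [LinearMap.smul_comp, LinearMap.comp_smul, LinearMap.lTensor_smul] }

theorem actT_tmul {ι : Type*} {c : C} (r : Repr k c ι) (a : Dual k B) (v : V) :
    actT π V a (c ⊗ₜ v) = ∑ i ∈ r.index, r.left i ⊗ₜ[k] (hit (π (r.right i)) a • v) := by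
  simp [actT, ← r.eq]; rfl

/-- The twisted action of the dual of `B` on `C ⊗ V`: `a • (c ⊗ v) = Σ c₁ ⊗ (π(c₂) ⇀ a) v`. -/
noncomputable def repT : Dual k B →ₐ[k] Module.End k (C ⊗[k] V) :=
  AlgHom.ofLinearMap (actT π V)
    (by
      refine TensorProduct.ext' fun c v => ?_
      rw [actT_tmul π V (ℛ k c)]
      simp only [hit_one, smul_assoc, one_smul, ← TensorProduct.smul_tmul, ← TensorProduct.sum_tmul]
      simp [sum_smul_counit])
    (by
      intro a a'
      refine TensorProduct.ext' fun c v => ?_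
      rw [Module.End.mul_apply, actT_tmul π V (ℛ k c), actT_tmul π V (ℛ k c), map_sum]
      let F : C →ₗ[k] C →ₗ[k] C →ₗ[k] C ⊗[k] V := LinearMap.mk₂ k (fun x y =>
        TensorProduct.mk k C V x ∘ₗ (Algebra.lsmul k k V (hit (π y) a)) ∘ₗ
          (Algebra.lsmul k k V).toLinearMap.flip v ∘ₗ hit.flip a' ∘ₗ π.toLinearMap)
        (by intros; ext; simp) (by intros; ext; simp [smul_tmul'])
        (by intros; ext; simp [tmul_add])
        (by intros; ext; simp)
      have h := coassoc_sum F (ℛ k c) (fun i => ℛ k _) (fun i => ℛ k _)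
      simp only [F, LinearMap.mk₂_apply, LinearMap.comp_apply] at h
      calc _ = _ := ?_
        _ = _ := h.symm
        _ = _ := ?_
      · refine Finset.sum_congr rfl fun i _ => ?_
        rw [hit_mul ((ℛ k ((ℛ k c).right i)).induced π), Finset.sum_smul, TensorProduct.tmul_sum]
        refine Finset.sum_congr rfl fun j _ => ?_
        rw [mul_smul]; rfl
      · refine Finset.sum_congr rfl fun i _ => ?_
        rw [actT_tmul π V (ℛ k _)]
        rfl)

/-- The trivial action of the dual of `B` on `k`. -/
noncomputable def repK : Dual k B →ₐ[k] Module.End k k :=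
  AlgHom.ofLinearMap
    { toFun := fun a => LinearMap.lsmul k k (a (1 : B))
      map_add' := by intro a b; ext; simp
      map_smul' := by intro a b; ext; simp }
    (by ext; simp)
    (by intro a b; ext; simp [Bialgebra.comul_one, Algebra.TensorProduct.one_def])

/-- Precomposition with `π`, from the dual of `B` to the dual of `C`. -/
noncomputable def pull : Dual k B →ₐ[k] Dual k C :=
  AlgHom.ofLinearMap
    { toFun := fun a => toConv (a.ofConv ∘ₗ π.toLinearMap)
      map_add' := by intro a b; ext; simp
      map_smul' := by intro a b; ext; simp }
    (by ext; simp)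
    (by
      intro a b
      ext c
      change (a * b) (π c) = (toConv (a.ofConv ∘ₗ π.toLinearMap) *
        toConv (b.ofConv ∘ₗ π.toLinearMap) : Dual k C) c
      rw [((ℛ k c).induced π).convMul_apply, (ℛ k c).convMul_apply]
      rfl)

/-- The dual of `C` as a left module over the dual of `B`. -/
noncomputable def repW : Dual k B →ₐ[k] Module.End k (Dual k C) :=
  (Algebra.lmul k (Dual k C)).comp (pull π)

theorem repW_apply (a : Dual k B) (φ : Dual k C) : repW π a φ = pull π a * φ := rfl

/-- The right coinvariants of `π`. -/
noncomputable def coinv : Submodule k C :=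
  LinearMap.ker (TensorProduct.map (LinearMap.id : C →ₗ[k] C) π.toLinearMap ∘ₗ comul -
    (TensorProduct.mk k C B).flip 1)

theorem mem_coinv {c : C} : c ∈ coinv π ↔
    TensorProduct.map (LinearMap.id : C →ₗ[k] C) π.toLinearMap (comul c) = c ⊗ₜ[k] (1 : B) := by
  simp [coinv, sub_eq_zero]

theorem repX_of_mem_coinv {c : C} (h : c ∈ coinv π) (a : Dual k B) :
    repX π a c = a 1 • c := by
  change actX π a c = _
  rw [actX_eq, (mem_coinv π).1 h]
  simp

/-- A vector on which the dual of `B` acts through evaluation at `1` is coinvariant, because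
functionals on `B` separate the points of `C ⊗ B`. -/
theorem mem_coinv_of_repX {c : C} (h : ∀ a : Dual k B, repX π a c = a 1 • c) : c ∈ coinv π := by
  rw [mem_coinv, ← sub_eq_zero]
  refine tmul_sep _ fun φ => ?_
  have := h (toConv φ)
  change actX π (toConv φ) c = φ 1 • c at this
  rw [actX_eq] at this
  rw [map_sub, map_sub]
  simpa [sub_eq_zero] using this

end Reps

/-! ### Homomorphisms out of twisted modules -/

section Theta

variable {k : Type*} [Field k]

/-- The identity map from `RM ρ` to the underlying space. -/
def RM.un {R : Type*} [Ring R] [Algebra k R] {M : Type*} [AddCommGroup M] [Module k M]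
    (ρ : R →ₐ[k] Module.End k M) : RM ρ →ₗ[k] M := LinearMap.id

theorem RM.un_smul {R : Type*} [Ring R] [Algebra k R] {M : Type*} [AddCommGroup M] [Module k M]
    (ρ : R →ₐ[k] Module.End k M) (a : R) (x : RM ρ) : RM.un ρ (a • x) = ρ a (RM.un ρ x) := rfl

variable {C : Type*} [Ring C] [HopfAlgebra k C]
  {B : Type*} [Ring B] [HopfAlgebra k B] (π : C →ₐc[k] B)
variable (V : Type*) [AddCommGroup V] [Module k V] [Module (Dual k B) V]
  [IsScalarTower k (Dual k B) V]

/-- `c ↦ L(c)(v)`. -/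
noncomputable def evL (L : C →ₗ[k] (V →ₗ[Dual k B] RM (repX π))) (v : V) : C →ₗ[k] C :=
  { toFun := fun c => RM.un _ (L c v)
    map_add' := by intros; simp
    map_smul' := by intros; simp }

/-- The map `C ⊗ V → C`, `c ⊗ v ↦ Σ L(c₁)(v) c₂`, attached to a family `L` of
homomorphisms `V → C`. -/
noncomputable def thetaLin (L : C →ₗ[k] (V →ₗ[Dual k B] RM (repX π))) : C ⊗[k] V →ₗ[k] C :=
  TensorProduct.lift (LinearMap.mk₂ k (fun c v =>
      LinearMap.mul' k C (LinearMap.rTensor C (evL π V L v) (comul c)))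
      (by intros; simp) (by intros; simp)
      (by
        intro c v w
        have : evL π V L (v + w) = evL π V L v + evL π V L w := by ext; simp [evL]
        simp [this, LinearMap.rTensor_add])
      (by
        intro t c v
        have : evL π V L (t • v) = t • evL π V L v := by
          ext c
          change RM.un _ (L c (t • v)) = t • RM.un _ (L c v)
          rw [← map_smul, LinearMap.map_smul_of_tower]
        simp [this, LinearMap.rTensor_smul]))

theorem thetaLin_tmul (L : C →ₗ[k] (V →ₗ[Dual k B] RM (repX π))) {ι : Type*} {c : C}
    (r : Repr k c ι) (v : V) :
    thetaLin π V L (c ⊗ₜ v) = ∑ i ∈ r.index, RM.un _ (L (r.left i) v) * r.right i := by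
  simp [thetaLin, ← r.eq, evL]

/-- `thetaLin` is linear over the dual of `B` for the twisted action on `C ⊗ V`. -/
theorem thetaLin_smul (L : C →ₗ[k] (V →ₗ[Dual k B] RM (repX π))) (a : Dual k B) (t : C ⊗[k] V) :
    thetaLin π V L (repT π V a t) = repX π a (thetaLin π V L t) := by
  induction t with
  | zero => simp
  | add x y hx hy => simp [hx, hy]
  | tmul c v =>
    rw [thetaLin_tmul π V L (ℛ k c), map_sum]
    change thetaLin π V L (actT π V a _) = _
    rw [actT_tmul π V (ℛ k c), map_sum]
    simp only [smul_actX π (ℛ k _), thetaLin_tmul π V L (ℛ k _), map_smul, RM.un_smul]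
    let F : C →ₗ[k] C →ₗ[k] C →ₗ[k] C := LinearMap.mk₂ k (fun x y =>
        LinearMap.mulRight k y ∘ₗ (repX π).toLinearMap.flip (evL π V L v x) ∘ₗ
          hit.flip a ∘ₗ π.toLinearMap)
        (by intros; ext; simp [add_mul]) (by intros; ext; simp)
        (by intros; ext; simp [mul_add])
        (by intros; ext; simp)
    exact coassoc_sum F (ℛ k c) (fun i => ℛ k _) (fun i => ℛ k _)

theorem thetaLin_add (L L' : C →ₗ[k] (V →ₗ[Dual k B] RM (repX π))) :
    thetaLin π V (L + L') = thetaLin π V L + thetaLin π V L' := by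
  refine TensorProduct.ext' fun c v => ?_
  simp [thetaLin_tmul π V _ (ℛ k c), add_mul, Finset.sum_add_distrib]

theorem thetaLin_smul_left (s : k) (L : C →ₗ[k] (V →ₗ[Dual k B] RM (repX π))) :
    thetaLin π V (s • L) = s • thetaLin π V L := by
  refine TensorProduct.ext' fun c v => ?_
  simp [thetaLin_tmul π V _ (ℛ k c), Finset.smul_sum]

/-- The family `L` is recovered from `thetaLin` by the antipode, so `L ↦ thetaLin L` is
injective. -/
theorem thetaLin_inv (L : C →ₗ[k] (V →ₗ[Dual k B] RM (repX π))) (c : C) (v : V) :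
    ∑ i ∈ (ℛ k c).index, thetaLin π V L ((ℛ k c).left i ⊗ₜ v) * antipode k ((ℛ k c).right i) =
      RM.un _ (L c v) := by
  let F : C →ₗ[k] C →ₗ[k] C →ₗ[k] C := LinearMap.mk₂ k (fun x y =>
        LinearMap.mulLeft k (evL π V L v x * y) ∘ₗ antipode k)
        (by intros; ext; simp [add_mul, mul_assoc]) (by intros; ext; simp [mul_assoc])
        (by intros; ext; simp [mul_add, add_mul, mul_assoc])
        (by intros; ext; simp [mul_assoc])
  have h := coassoc_sum F (ℛ k c) (fun i => ℛ k _) (fun i => ℛ k _)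
  simp only [F, LinearMap.mk₂_apply, LinearMap.comp_apply, LinearMap.mulLeft_apply] at h
  simp only [thetaLin_tmul π V L (ℛ k _), Finset.sum_mul]
  refine h.trans ?_
  simp only [mul_assoc, ← Finset.mul_sum, sum_mul_antipode_eq_smul]
  simp only [mul_smul_comm, mul_one, ← map_smul, ← map_sum, sum_smul_counit]
  rfl

/-- Tensoring with `C` multiplies the dimension by `dim C` and `dim Hom_R(-, C)` by at least as
much. -/
theorem homDim_twist [FiniteDimensional k C] [FiniteDimensional k B] [FiniteDimensional k V] :
    dimQ k C * homDim k (Dual k B) (RM (repX π)) V ≤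
      homDim k (Dual k B) (RM (repX π)) (RM (repT π V)) := by
  let Θ : (C →ₗ[k] (V →ₗ[Dual k B] RM (repX π))) →ₗ[k]
      (RM (repT π V) →ₗ[Dual k B] RM (repX π)) :=
    { toFun := fun L => mkHom (k := k) (V := RM (repT π V)) (X := RM (repX π))
        (thetaLin π V L) (thetaLin_smul π V L)
      map_add' := by
        exact fun L L' => LinearMap.ext (LinearMap.congr_fun (thetaLin_add π V L L') : _)
      map_smul' := by
        exact fun s L => LinearMap.ext (LinearMap.congr_fun (thetaLin_smul_left π V s L) : _) }
  have hΘ : Function.Injective Θ := by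
    rw [← LinearMap.ker_eq_bot, LinearMap.ker_eq_bot']
    intro L hL
    ext c v
    have hz : ∀ t, thetaLin π V L t = 0 := fun t => LinearMap.congr_fun hL t
    have := thetaLin_inv π V L c v
    simp only [hz, zero_mul, Finset.sum_const_zero] at this
    exact this.symm
  have h := LinearMap.finrank_le_finrank_of_injective hΘ
  rw [Module.finrank_linearMap] at h
  unfold dimQ homDim
  exact_mod_cast h

end Theta

/-! ### An invariant vector from the antipode -/

section Invariant

variable {k : Type*} [Field k] {C : Type*} [Ring C] [HopfAlgebra k C]
  {B : Type*} [Ring B] [HopfAlgebra k B] (π : C →ₐc[k] B)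
variable {V : Type*} [AddCommGroup V] [Module k V] [Module (Dual k B) V]
  [IsScalarTower k (Dual k B) V]

theorem repT_tmul {ι : Type*} {c : C} (r : Repr k c ι) (a : Dual k B) (v : V) :
    repT π V a (c ⊗ₜ v) = ∑ i ∈ r.index, r.left i ⊗ₜ[k] (hit (π (r.right i)) a • v) :=
  actT_tmul π V r a v

/-- `π ⊗ 1 : C ⊗ V → B ⊗ V` is linear for the twisted actions, that on `B ⊗ V` being the one
attached to the identity of `B`. -/
theorem repT_push (a : Dual k B) (t : C ⊗[k] V) :
    LinearMap.rTensor V π.toLinearMap (repT π V a t) =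
      repT (BialgHom.id k B) V a (LinearMap.rTensor V π.toLinearMap t) := by
  induction t with
  | zero => simp
  | add x y hx hy => simp only [map_add, hx, hy]
  | tmul c v =>
    rw [repT_tmul π (ℛ k c), map_sum]
    exact (repT_tmul (BialgHom.id k B) ((ℛ k c).induced π) a v).symm

/-- The twisted module `C ⊗ V` is functorial in `V`. -/
theorem repT_natural {U : Type*} [AddCommGroup U] [Module k U] [Module (Dual k B) U]
    [IsScalarTower k (Dual k B) U] (f : U →ₗ[Dual k B] V) (a : Dual k B) (t : C ⊗[k] U) :
    LinearMap.lTensor C (f.restrictScalars k) (repT π U a t) =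
      repT π V a (LinearMap.lTensor C (f.restrictScalars k) t) := by
  induction t with
  | zero => simp
  | add x y hx hy => simp only [map_add, hx, hy]
  | tmul c v =>
    rw [repT_tmul π (ℛ k c), map_sum, LinearMap.lTensor_tmul, repT_tmul π (ℛ k c)]
    simp

variable [FiniteDimensional k B]

/-- The identification of `B ⊗ B^*` with `End(B)`. -/
noncomputable def endEquiv : B ⊗[k] Dual k B ≃ₗ[k] (B →ₗ[k] B) :=
  TensorProduct.comm k B (Dual k B) ≪≫ₗ
    LinearEquiv.rTensor B (WithConv.linearEquiv k (B →ₗ[k] k)) ≪≫ₗ dualTensorHomEquiv k B B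

theorem endEquiv_tmul (b : B) (r : Dual k B) (y : B) : endEquiv (b ⊗ₜ[k] r) y = r y • b := by
  simp [endEquiv]

/-- Under `B ⊗ B^* ≃ End(B)`, the map `ε ⊗ 1` becomes composition with `ε`. -/
theorem endEquiv_counit (t : B ⊗[k] Dual k B) (y : B) :
    (TensorProduct.lid k (Dual k B) (LinearMap.rTensor (Dual k B) counit t)) y =
      counit (R := k) (endEquiv t y) := by
  induction t with
  | zero => simp
  | add x y hx hy => simp_all
  | tmul b r => simp [endEquiv_tmul, mul_comm]

/-- The twisted action on `B ⊗ B^*` read on `End(B)`: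
`(a • f)(y) = (1 ⊗ a)(Σ (1 ⊗ y₁) Δ(f(y₂)))`. -/
theorem endEquiv_repT (a : Dual k B) (t : B ⊗[k] Dual k B) (y : B) :
    endEquiv (repT (BialgHom.id k B) (Dual k B) a t) y =
      TensorProduct.rid k B (LinearMap.lTensor B a.ofConv (∑ i ∈ (ℛ k y).index,
        ((1 : B) ⊗ₜ[k] (ℛ k y).left i) * comul (R := k) (endEquiv t ((ℛ k y).right i)))) := by
  induction t with
  | zero => simp
  | add s t hs ht => simp [hs, ht, mul_add, Finset.sum_add_distrib]
  | tmul b r =>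
    rw [repT_tmul (BialgHom.id k B) (ℛ k b)]
    have h : ∀ (b' : B) (d : Dual k B), endEquiv (b' ⊗ₜ[k] (d * r)) y =
        ∑ j ∈ (ℛ k y).index, (d ((ℛ k y).left j) * r ((ℛ k y).right j)) • b' := by
      intro b' d
      rw [endEquiv_tmul, (ℛ k y).convMul_apply, Finset.sum_smul]
    simp only [map_sum, LinearMap.sum_apply, smul_eq_mul, h, endEquiv_tmul]
    rw [Finset.sum_comm]
    refine Finset.sum_congr rfl fun j _ => ?_
    conv_rhs => rw [map_smul, ← (ℛ k b).eq]
    simp [Finset.mul_sum, Finset.smul_sum, hit_apply, smul_smul, mul_comm]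

/-- The element of `B ⊗ B^*` corresponding to the antipode is invariant. -/
theorem repT_antipode (a : Dual k B) :
    repT (BialgHom.id k B) (Dual k B) a (endEquiv.symm (antipode k)) =
      a 1 • endEquiv.symm (antipode k) := by
  apply endEquiv.injective
  ext y
  rw [endEquiv_repT]
  simp only [LinearEquiv.apply_symm_apply, map_smul]
  rw [sum_tmul_mul_comul_antipode]
  simp

/-- For `V ≠ 0` the twisted module `B ⊗ V` has a nonzero invariant vector: the image of the antipode
under `B ⊗ B^* → B ⊗ V`, `b ⊗ a ↦ b ⊗ a v`. It is nonzero because `ε ⊗ 1` sends it to `v`. -/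
theorem exists_invariant {v : V} (hv : v ≠ 0) :
    ∃ g : B ⊗[k] V, g ≠ 0 ∧ ∀ a : Dual k B, repT (BialgHom.id k B) V a g = a 1 • g := by
  let f : Dual k B →ₗ[Dual k B] V := LinearMap.toSpanSingleton _ _ v
  refine ⟨LinearMap.lTensor B (f.restrictScalars k) (endEquiv.symm (antipode k)), ?_, ?_⟩
  · intro h
    have h1 : TensorProduct.lid k (Dual k B) (LinearMap.rTensor (Dual k B) counit
        (endEquiv.symm (antipode k (A := B)))) = 1 := by
      ext y
      change (TensorProduct.lid k (Dual k B) _) y = (1 : Dual k B) y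
      rw [endEquiv_counit]; simp
    have h2 : ∀ t : B ⊗[k] Dual k B, TensorProduct.lid k V (LinearMap.rTensor V counit
        (LinearMap.lTensor B (f.restrictScalars k) t)) =
          f (TensorProduct.lid k (Dual k B) (LinearMap.rTensor (Dual k B) counit t)) := by
      intro t
      induction t with
      | zero => simp
      | add x y hx hy => simp_all
      | tmul b r => simp [f]
    have h3 := h2 (endEquiv.symm (antipode k))
    rw [h1, h] at h3
    simp [f] at h3
    exact hv h3.symm
  · intro a
    rw [← repT_natural, repT_antipode, map_smul]

end Invariant

/-! ### The Galois map and the dimension formula -/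

section Galois

variable {k : Type*} [Field k] {C : Type*} [Ring C] [HopfAlgebra k C]
  {B : Type*} [Ring B] [HopfAlgebra k B] (π : C →ₐc[k] B)

/-- The Galois map `c ⊗ x ↦ c x₁ ⊗ x₂`. -/
noncomputable def galois : C ⊗[k] C →ₗ[k] C ⊗[k] C :=
  TensorProduct.lift (LinearMap.mk₂ k (fun c x => (c ⊗ₜ[k] (1 : C)) * comul (R := k) x)
    (by intros; simp [add_tmul, add_mul]) (by intros; simp [← smul_tmul'])
    (by intros; simp [mul_add]) (by intros; simp))

theorem galois_tmul {ι : Type*} {x : C} (r : Repr k x ι) (c : C) :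
    galois (c ⊗ₜ[k] x) = ∑ i ∈ r.index, (c * r.left i) ⊗ₜ[k] r.right i := by
  simp [galois, ← r.eq, Finset.mul_sum]

/-- The inverse `p ⊗ x ↦ p S(x₁) ⊗ x₂` of the Galois map. -/
noncomputable def galoisInv : C ⊗[k] C →ₗ[k] C ⊗[k] C :=
  TensorProduct.lift (LinearMap.mk₂ k (fun c x => (c ⊗ₜ[k] (1 : C)) *
      LinearMap.rTensor C (antipode k) (comul (R := k) x))
    (by intros; simp [add_tmul, add_mul]) (by intros; simp [← smul_tmul'])
    (by intros; simp [mul_add]) (by intros; simp))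

theorem galoisInv_tmul {ι : Type*} {x : C} (r : Repr k x ι) (c : C) :
    galoisInv (c ⊗ₜ[k] x) = ∑ i ∈ r.index, (c * antipode k (r.left i)) ⊗ₜ[k] r.right i := by
  simp [galoisInv, ← r.eq, Finset.mul_sum]

theorem galois_injective : Function.Injective (galois (k := k) (C := C)) := by
  have h : galoisInv ∘ₗ galois (k := k) (C := C) = LinearMap.id := by
    refine TensorProduct.ext' fun c x => ?_
    let F : C →ₗ[k] C →ₗ[k] C →ₗ[k] C ⊗[k] C := LinearMap.mk₂ k (fun x y =>
        TensorProduct.mk k C C (c * (x * antipode k y)))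
        (by intros; ext; simp [add_mul, mul_add])
        (by intros; ext; simp)
        (by intros; ext; simp [mul_add])
        (by intros; ext; simp)
    have h := coassoc_sum F (ℛ k x) (fun i => ℛ k _) (fun i => ℛ k _)
    simp only [F, LinearMap.mk₂_apply, TensorProduct.mk_apply] at h
    rw [LinearMap.comp_apply, galois_tmul (ℛ k x), map_sum]
    simp only [galoisInv_tmul (ℛ k _), mul_assoc]
    rw [← h]
    simp only [← TensorProduct.sum_tmul, ← Finset.mul_sum, sum_mul_antipode_eq_smul]
    simp only [mul_smul_comm, mul_one, TensorProduct.smul_tmul, ← TensorProduct.tmul_sum,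
      sum_counit_smul, LinearMap.id_apply]
  exact Function.LeftInverse.injective (g := galoisInv) (LinearMap.congr_fun h)

/-- `c ⊗ x`, with `c` coinvariant, acts on functionals by `φ ↦ Σ φ(x₂) c x₁`. -/
noncomputable def psi : coinv π ⊗[k] C →ₗ[k] Dual k C →ₗ[k] C :=
  LinearMap.mk₂ k (fun t φ => TensorProduct.rid k C (LinearMap.lTensor C φ.ofConv
      (galois (LinearMap.rTensor C (coinv π).subtype t))))
    (by intros; simp) (by intros; simp)
    (by intros; simp [LinearMap.lTensor_add]) (by intros; simp [LinearMap.lTensor_smul])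

theorem psi_tmul {ι : Type*} {x : C} (r : Repr k x ι) (c : coinv π) (φ : Dual k C) :
    psi π (c ⊗ₜ x) φ = ∑ i ∈ r.index, φ (r.right i) • ((c : C) * r.left i) := by
  simp [psi, galois_tmul r]

/-- `psi` takes values in homomorphisms from the dual of `C` to `C`, because `c` is coinvariant. -/
theorem psi_smul (a : Dual k B) (t : coinv π ⊗[k] C) (φ : Dual k C) :
    psi π t (repW π a φ) = repX π a (psi π t φ) := by
  induction t with
  | zero => simp
  | add x y hx hy => simp_all
  | tmul c x =>
    rw [psi_tmul π (ℛ k x), psi_tmul π (ℛ k x), map_sum]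
    let F : C →ₗ[k] C →ₗ[k] C →ₗ[k] C := LinearMap.mk₂ k (fun x y =>
        (LinearMap.toSpanSingleton k C (a (π y) • ((c : C) * x))) ∘ₗ φ.ofConv)
        (by intros; ext; simp [mul_add])
        (by
          intros; ext
          simp only [LinearMap.comp_apply, LinearMap.toSpanSingleton_apply, mul_smul_comm,
            smul_smul, LinearMap.smul_apply]
          congr 1; ring)
        (by intros; ext; simp [add_smul])
        (by intros; ext; simp [smul_smul, mul_left_comm])
    have h := coassoc_sum F (ℛ k x) (fun i => ℛ k _) (fun i => ℛ k _)
    simp only [F, LinearMap.mk₂_apply, LinearMap.comp_apply,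
        LinearMap.toSpanSingleton_apply] at h
    calc _ = _ := ?_
      _ = _ := h.symm
      _ = _ := ?_
    · refine Finset.sum_congr rfl fun i _ => ?_
      rw [repW_apply, (ℛ k _).convMul_apply, Finset.sum_smul]
      refine Finset.sum_congr rfl fun j _ => ?_
      rw [mul_comm, mul_smul]; rfl
    · refine Finset.sum_congr rfl fun i _ => ?_
      rw [map_smul, smul_actX π (ℛ k _), Finset.smul_sum]
      refine Finset.sum_congr rfl fun j _ => ?_
      rw [repX_of_mem_coinv π c.2, hit_apply, one_mul, smul_mul_assoc]

theorem psi_injective : Function.Injective (psi π) := by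
  intro s t hst
  have h1 : galois (LinearMap.rTensor C (coinv π).subtype s) =
      galois (LinearMap.rTensor C (coinv π).subtype t) := by
    rw [← sub_eq_zero]
    refine tmul_sep _ fun φ => ?_
    rw [map_sub, map_sub, sub_eq_zero]
    exact LinearMap.congr_fun hst (toConv φ)
  exact Module.Flat.rTensor_preserves_injective_linearMap _ (Submodule.subtype_injective _)
    (galois_injective h1)

variable [FiniteDimensional k C]

/-- Injectivity of the Galois map bounds `dim Hom(C^*, C)` below by `dim C^{co π} · dim C`. -/
theorem le_homDim_W : dimQ k (coinv π) * dimQ k C ≤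
    homDim k (Dual k B) (RM (repX π)) (RM (repW π)) := by
  let Ψ : coinv π ⊗[k] C →ₗ[k] (RM (repW π) →ₗ[Dual k B] RM (repX π)) :=
    { toFun := fun t => mkHom (k := k) (V := RM (repW π)) (X := RM (repX π))
        (psi π t) (fun a φ => psi_smul π a t φ)
      map_add' := fun s t => LinearMap.ext (LinearMap.congr_fun (map_add (psi π) s t) : _)
      map_smul' := fun s t => LinearMap.ext (LinearMap.congr_fun (map_smul (psi π) s t) : _) }
  have hΨ : Function.Injective Ψ := by
    intro s t h
    exact psi_injective π (LinearMap.ext fun φ => LinearMap.congr_fun h φ)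
  have h := LinearMap.finrank_le_finrank_of_injective hΨ
  rw [Module.finrank_tensorProduct] at h
  unfold dimQ homDim
  exact_mod_cast h

/-- A homomorphism from the trivial module to `C` is a choice of coinvariant. -/
theorem homDim_K_le : homDim k (Dual k B) (RM (repX π)) (RM (repK (k := k) (B := B))) ≤
    dimQ k (coinv π) := by
  let e₁ : RM (repK (k := k) (B := B)) := (1 : k)
  have h₁ : ∀ a : Dual k B, a • e₁ = a 1 • e₁ := fun _ => rfl
  let E : (RM (repK (k := k) (B := B)) →ₗ[Dual k B] RM (repX π)) →ₗ[k] coinv π :=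
    { toFun := fun T => ⟨RM.un _ (T e₁), mem_coinv_of_repX π fun a => by
        rw [← RM.un_smul, ← map_smul, h₁, LinearMap.map_smul_of_tower, map_smul]⟩
      map_add' := fun _ _ => rfl
      map_smul' := fun _ _ => rfl }
  have hE : Function.Injective E := by
    intro T T' h
    refine LinearMap.ext fun z => ?_
    have hz : z = (show k from z) • e₁ := (mul_one (show k from z)).symm
    have h' : T e₁ = T' e₁ := congrArg Subtype.val h
    rw [hz, LinearMap.map_smul_of_tower, LinearMap.map_smul_of_tower, h']
  have h := LinearMap.finrank_le_finrank_of_injective hE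
  unfold dimQ homDim
  exact_mod_cast h

/-- If the maximal ratio `l` is attained by some nonzero module, then twisting produces a module
attaining it that contains the trivial module, whence `l ≤ dim C^{co π}`. -/
theorem le_coinv_of_tight [FiniteDimensional k B] (hπ : Function.Surjective π) {l : ℚ}
    (hl : IsMaxRatio k (Dual k B) (RM (repX π)) l)
    {V : Type*} [AddCommGroup V] [Module k V] [Module (Dual k B) V]
    [IsScalarTower k (Dual k B) V] [FiniteDimensional k V]
    (hV : homDim k (Dual k B) (RM (repX π)) V = l * dimQ k V) {v : V} (hv : v ≠ 0) :
    l ≤ dimQ k (coinv π) := by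
  have hT : l * dimQ k (RM (repT π V)) ≤
      homDim k (Dual k B) (RM (repX π)) (RM (repT π V)) := by
    refine le_trans (le_of_eq ?_) (homDim_twist π V)
    rw [hV, dimQ_RM]
    unfold dimQ
    rw [Module.finrank_tensorProduct]
    push_cast; ring
  let p : RM (repT π V) →ₗ[Dual k B] RM (repT (BialgHom.id k B) V) :=
    mkHom (k := k) (V := RM (repT π V)) (X := RM (repT (BialgHom.id k B) V))
      (LinearMap.rTensor V π.toLinearMap) (repT_push π)
  have hp : Function.Surjective p := LinearMap.rTensor_surjective V hπ
  have hT' := tight_quot k hl p hp hT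
  obtain ⟨g, hg, hginv⟩ := exists_invariant (k := k) (B := B) hv
  let i : RM (repK (k := k) (B := B)) →ₗ[Dual k B] RM (repT (BialgHom.id k B) V) :=
    mkHom (k := k) (V := RM (repK (k := k) (B := B))) (X := RM (repT (BialgHom.id k B) V))
      (LinearMap.toSpanSingleton k (B ⊗[k] V) g) (by
        intro a z
        change (a 1 * (show k from z)) • g = repT (BialgHom.id k B) V a ((show k from z) • g)
        rw [map_smul, hginv, mul_comm, mul_smul])
  have hi : Function.Injective i := smul_left_injective k hg
  have hK := tight_sub k hl i hi hT'
  have hK1 : dimQ k (RM (repK (k := k) (B := B))) = 1 := by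
    rw [dimQ_RM]; simp [dimQ]
  rw [hK1, mul_one] at hK
  exact hK.trans (homDim_K_le π)

/-- `dim C = dim C^{co π} · dim B` for every quotient `π` of a finite-dimensional Hopf algebra; the
coinvariants need not form a Hopf subalgebra. The maximal ratio equals `dim C^{co π}`, and it is
attained by the dual of `C`, hence by its submodule the dual of `B`. -/
theorem finrank_eq_mul_coinv [FiniteDimensional k B] (hπ : Function.Surjective π) :
    Module.finrank k C = Module.finrank k (coinv π) * Module.finrank k B := by
  have hnt : Nontrivial (Dual k B) := by
    refine ⟨⟨1, 0, fun h => one_ne_zero (α := k) ?_⟩⟩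
    have : (1 : Dual k B) 1 = (0 : Dual k B) 1 := by rw [h]
    simp at this
  have hntC : Nontrivial C := by
    refine ⟨⟨1, 0, fun h => one_ne_zero (α := k) ?_⟩⟩
    have : counit (R := k) (1 : C) = counit (R := k) (0 : C) := by rw [h]
    simp at this
  have hn : 0 < dimQ k C := by
    unfold dimQ; exact_mod_cast Module.finrank_pos
  obtain ⟨l, hl⟩ := exists_isMaxRatio k (Dual k B) (RM (repX π))
  obtain ⟨I, hI, hIeq⟩ := hl.2
  have hv : (Submodule.Quotient.mk 1 : Dual k B ⧸ I) ≠ 0 := by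
    rw [Ne, Submodule.Quotient.mk_eq_zero, ← Ideal.eq_top_iff_one]
    exact hI
  have h1 := le_coinv_of_tight π hπ hl hIeq hv
  have hdW : dimQ k (RM (repW π)) = dimQ k C := by
    rw [dimQ_RM]; unfold dimQ; rw [finrank_dual]
  have h2 : homDim k (Dual k B) (RM (repX π)) (RM (repW π)) ≤ l * dimQ k C :=
    hdW ▸ homDim_le_of_isMaxRatio k (RM (repX π)) (V := RM (repW π)) hl
  have h3 := le_homDim_W π
  have hlm : l = dimQ k (coinv π) :=
    le_antisymm h1 (le_of_mul_le_mul_right (h3.trans h2) hn)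
  have hW : l * dimQ k (RM (repW π)) ≤
      homDim k (Dual k B) (RM (repX π)) (RM (repW π)) := by
    rw [hdW, hlm]; exact h3
  let j : Dual k B →ₗ[Dual k B] RM (repW π) :=
    mkHom (k := k) (V := Dual k B) (X := RM (repW π)) (pull π).toLinearMap
      (fun a b => map_mul (pull π) a b)
  have hj : Function.Injective j := by
    intro a b h
    ext x
    obtain ⟨c, rfl⟩ := hπ x
    have h' : pull π a = pull π b := h
    have : (pull π a) c = (pull π b) c := by rw [h']
    exact this
  have hR := tight_sub k hl j hj hW
  have hR' := homDim_le_of_isMaxRatio k (RM (repX π)) (V := Dual k B) hl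
  have hself : homDim k (Dual k B) (RM (repX π)) (Dual k B) = dimQ k C :=
    homDim_self k (Dual k B) (RM (repX π))
  have hdR : dimQ k (Dual k B) = dimQ k B := by unfold dimQ; rw [finrank_dual]
  rw [hself, hdR, hlm] at hR hR'
  unfold dimQ at hR hR'
  exact_mod_cast le_antisymm hR' hR

end Galois

/-! ### The ideal `A⁺C` -/

section Coinvariants

variable {k : Type*} [Field k] {C : Type*} [Ring C] [HopfAlgebra k C]
  {B : Type*} [Ring B] [HopfAlgebra k B] (π : C →ₐc[k] B)

/-- `π` restricts to the counit on the coinvariants. -/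
theorem apply_of_mem_coinv {a : C} (ha : a ∈ coinv π) :
    π a = algebraMap k B (counit (R := k) a) := by
  have h := congrArg (fun t => TensorProduct.lid k B (LinearMap.rTensor B counit t))
    ((mem_coinv π).1 ha)
  rw [← (ℛ k a).eq] at h
  simp only [map_sum, TensorProduct.map_tmul, LinearMap.rTensor_tmul, TensorProduct.lid_tmul,
    LinearMap.id_apply, ← map_smul] at h
  rw [← map_sum, sum_counit_smul] at h
  rw [Algebra.algebraMap_eq_smul_one]
  exact h

/-- The coinvariants are stable under the left adjoint action `a ↦ Σ c₁ a S(c₂)` of `C`. -/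
theorem adjoint_mem_coinv {a : C} (ha : a ∈ coinv π) (c : C) :
    ∑ i ∈ (ℛ k c).index, (ℛ k c).left i * a * antipode k ((ℛ k c).right i) ∈ coinv π := by
  let δ : C →ₐ[k] C ⊗[k] B := (Algebra.TensorProduct.map (AlgHom.id k C) (π : C →ₐ[k] B)).comp
    (Bialgebra.comulAlgHom k C)
  let φ : C ⊗[k] C →ₐ[k] C ⊗[k] B := Algebra.TensorProduct.map (AlgHom.id k C) (π : C →ₐ[k] B)
  have hδ : ∀ x, δ x = TensorProduct.map (LinearMap.id : C →ₗ[k] C) π.toLinearMap (comul x) :=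
    fun _ => rfl
  have hφ : ∀ x, φ (comul x) = δ x := fun _ => rfl
  rw [mem_coinv, ← hδ, map_sum]
  let F : C →ₗ[k] C →ₗ[k] C →ₗ[k] C ⊗[k] B := LinearMap.mk₂ k (fun x y =>
      LinearMap.mulLeft k ((x * a) ⊗ₜ[k] π y) ∘ₗ δ.toLinearMap ∘ₗ antipode k)
      (by intros; ext; simp [add_mul, add_tmul]) (by intros; ext; simp [← smul_tmul'])
      (by intros; ext; simp [add_mul, tmul_add])
      (by intros; ext; simp)
  have h := coassoc_sum F (ℛ k c) (fun i => ℛ k _) (fun i => ℛ k _)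
  simp only [F, LinearMap.mk₂_apply, LinearMap.comp_apply, LinearMap.mulLeft_apply,
    AlgHom.toLinearMap_apply] at h
  calc _ = _ := ?_
    _ = _ := h
    _ = _ := ?_
  · refine Finset.sum_congr rfl fun i _ => ?_
    rw [map_mul, map_mul, ← Finset.sum_mul]
    congr 1
    rw [hδ a, (mem_coinv π).1 ha, hδ, ← (ℛ k ((ℛ k c).left i)).eq]
    simp [Finset.sum_mul]
    rfl
  · rw [TensorProduct.sum_tmul]
    refine Finset.sum_congr rfl fun i _ => ?_
    have h2 := congrArg φ (sum_tmul_mul_comul_antipode (k := k) ((ℛ k c).right i))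
    simp only [map_sum, map_mul, hφ] at h2
    have h3 := congrArg (fun t => (((ℛ k c).left i * a) ⊗ₜ[k] (1 : B)) * t) h2
    simpa [φ, Finset.mul_sum, ← mul_assoc] using h3

/-- `c a = Σ (c₁ a S(c₂)) c₃`. -/
theorem mul_eq_sum_adjoint (c a : C) :
    ∑ i ∈ (ℛ k c).index, (∑ j ∈ (ℛ k ((ℛ k c).left i)).index,
      (ℛ k ((ℛ k c).left i)).left j * a * antipode k ((ℛ k ((ℛ k c).left i)).right j)) *
        (ℛ k c).right i = c * a := by
  let F : C →ₗ[k] C →ₗ[k] C →ₗ[k] C := LinearMap.mk₂ k (fun x y =>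
      LinearMap.mulLeft k (x * a * antipode k y))
      (by intros; ext; simp [add_mul, mul_assoc]) (by intros; ext; simp [mul_assoc])
      (by intros; ext; simp [mul_add, add_mul, mul_assoc])
      (by intros; ext; simp [mul_assoc])
  have h := coassoc_sum F (ℛ k c) (fun i => ℛ k _) (fun i => ℛ k _)
  simp only [F, LinearMap.mk₂_apply, LinearMap.mulLeft_apply] at h
  simp only [Finset.sum_mul]
  rw [h]
  simp only [mul_assoc, ← Finset.mul_sum, sum_antipode_mul_eq_smul]
  simp only [mul_smul_comm, mul_one, ← smul_mul_assoc, ← Finset.sum_mul, sum_smul_counit]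

end Coinvariants

section AugIdeal

variable {k : Type*} [Field k] {C : Type*} [Ring C] [HopfAlgebra k C] (A : Subalgebra k C)

/-- `A⁺C`, as a subspace of `C`, where `A⁺` is the kernel of the counit on `A`. -/
def augSpan : Submodule k C := Submodule.span k
  {w : C | ∃ a ∈ A, ∃ c : C, counit (R := k) a = (0 : k) ∧ w = a * c}

variable {A} in
theorem mul_mem_augSpan {a : C} (ha : a ∈ A) (h0 : counit (R := k) a = 0) (c : C) :
    a * c ∈ augSpan A := Submodule.subset_span ⟨a, ha, c, h0, rfl⟩

variable {A} in
theorem augSpan_mul {z : C} (hz : z ∈ augSpan A) (d : C) : z * d ∈ augSpan A := by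
  have : augSpan A ≤ (augSpan A).comap (LinearMap.mulRight k d) := by
    refine Submodule.span_le.2 ?_
    rintro _ ⟨a, ha, c, h0, rfl⟩
    change a * c * d ∈ augSpan A
    rw [mul_assoc]
    exact mul_mem_augSpan ha h0 _
  exact this hz

variable {A} in
/-- `A⁺C` is a left ideal if `A` is stable under the left adjoint action. -/
theorem mul_augSpan (had : ∀ a ∈ A, ∀ c : C,
      ∑ i ∈ (ℛ k c).index, (ℛ k c).left i * a * antipode k ((ℛ k c).right i) ∈ A)
    (d : C) {z : C} (hz : z ∈ augSpan A) : d * z ∈ augSpan A := by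
  have : augSpan A ≤ (augSpan A).comap (LinearMap.mulLeft k d) := by
    refine Submodule.span_le.2 ?_
    rintro _ ⟨a, ha, c, h0, rfl⟩
    change d * (a * c) ∈ augSpan A
    rw [← mul_assoc, ← mul_eq_sum_adjoint (k := k) d a, Finset.sum_mul]
    refine Submodule.sum_mem _ fun i _ => augSpan_mul (mul_mem_augSpan (had a ha _) ?_ _) c
    simp [h0]
  exact this hz

variable (had : ∀ a ∈ A, ∀ c : C,
      ∑ i ∈ (ℛ k c).index, (ℛ k c).left i * a * antipode k ((ℛ k c).right i) ∈ A)

/-- `A⁺C` as a left ideal, for `A` stable under the left adjoint action. -/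
def augIdeal : Ideal C :=
  { augSpan A with smul_mem' := fun d _ hz => mul_augSpan had d hz }

theorem mem_augIdeal {z : C} : z ∈ augIdeal A had ↔ z ∈ augSpan A := Iff.rfl

instance : (augIdeal A had).IsTwoSided := ⟨fun d hz => augSpan_mul hz d⟩

/-- Modulo `A⁺C`, elements of `A` become the scalars `ε(a)`. -/
theorem mk_of_mem {a : C} (ha : a ∈ A) : Ideal.Quotient.mkₐ k (augIdeal A had) a =
    counit (R := k) a • (1 : C ⧸ augIdeal A had) := by
  have h : a - algebraMap k C (counit (R := k) a) ∈ augIdeal A had := by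
    have := mul_mem_augSpan (A := A) (sub_mem ha (A.algebraMap_mem (counit (R := k) a)))
      (by simp) 1
    rwa [mul_one] at this
  have := (Ideal.Quotient.eq (I := augIdeal A had)).2 h
  refine Eq.trans this ?_
  rw [← Algebra.algebraMap_eq_smul_one]; rfl

/-- Elements of a subcoalgebra `A` are coinvariant for the quotient map `C → C ⧸ A⁺C`. -/
theorem map_mk_comul (hAcoalg : IsSubcoalgebra k A.toSubmodule) {a : C} (ha : a ∈ A) :
    TensorProduct.map (LinearMap.id : C →ₗ[k] C)
      (Ideal.Quotient.mkₐ k (augIdeal A had)).toLinearMap (comul a) =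
        a ⊗ₜ[k] (1 : C ⧸ augIdeal A had) := by
  obtain ⟨t, ht⟩ := hAcoalg a ha
  have h : ∀ t : A.toSubmodule ⊗[k] A.toSubmodule, TensorProduct.map (LinearMap.id : C →ₗ[k] C)
      (Ideal.Quotient.mkₐ k (augIdeal A had)).toLinearMap
        (TensorProduct.map A.toSubmodule.subtype A.toSubmodule.subtype t) =
      TensorProduct.rid k C (LinearMap.lTensor C counit
        (TensorProduct.map A.toSubmodule.subtype A.toSubmodule.subtype t)) ⊗ₜ[k]
          (1 : C ⧸ augIdeal A had) := by
    intro t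
    induction t with
    | zero => simp
    | add x y hx hy => simp only [map_add, hx, hy, add_tmul]
    | tmul x y =>
      simp only [TensorProduct.map_tmul, AlgHom.toLinearMap_apply, Submodule.subtype_apply,
        LinearMap.id_apply, LinearMap.lTensor_tmul, TensorProduct.rid_tmul]
      rw [mk_of_mem A had y.2, TensorProduct.smul_tmul]
  rw [← ht, h, ht]
  simp

/-- `A⁺C` is a Hopf ideal. It is stable under `S` because `S(a c) = S(c) S(a)` lies in the left
ideal generated by `A⁺`, which is contained in `A⁺C`. -/
theorem isHopfIdeal (hAcoalg : IsSubcoalgebra k A.toSubmodule)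
    (hAS : ∀ a ∈ A, antipode k a ∈ A) : (augIdeal A had).IsHopfIdeal k where
  counit_eq_zero := by
    have : augSpan A ≤ LinearMap.ker (counit (R := k) (A := C)) := by
      refine Submodule.span_le.2 ?_
      rintro _ ⟨a, ha, c, h0, rfl⟩
      simp [h0]
    exact fun x hx => this hx
  map_mkQ_comul_eq_zero := by
    let q := Ideal.Quotient.mkₐ k (augIdeal A had)
    let f : C →ₐ[k] (C ⧸ augIdeal A had) ⊗[k] (C ⧸ augIdeal A had) :=
      (Algebra.TensorProduct.map q q).comp (Bialgebra.comulAlgHom k C)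
    have : augSpan A ≤ LinearMap.ker f.toLinearMap := by
      refine Submodule.span_le.2 ?_
      rintro _ ⟨a, ha, c, h0, rfl⟩
      change f (a * c) = 0
      have h1 : f a = LinearMap.rTensor _ q.toLinearMap (TensorProduct.map
          (LinearMap.id : C →ₗ[k] C) q.toLinearMap (comul a)) := by
        rw [← LinearMap.comp_apply, LinearMap.rTensor, ← TensorProduct.map_comp]
        rfl
      rw [map_mul, h1, map_mk_comul A had hAcoalg ha, LinearMap.rTensor_tmul,
        AlgHom.toLinearMap_apply, mk_of_mem A had ha, h0]
      simp
    exact fun x hx => this hx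
  antipode_mem := by
    have : augSpan A ≤ (augSpan A).comap (antipode k) := by
      refine Submodule.span_le.2 ?_
      rintro _ ⟨a, ha, c, h0, rfl⟩
      change antipode k (a * c) ∈ augSpan A
      rw [antipode_mul_antidistrib]
      refine mul_augSpan had _ ?_
      rw [← mul_one (antipode k a)]
      exact mul_mem_augSpan (hAS a ha) (by simp [h0]) 1
    exact fun x hx => this hx

end AugIdeal

end HopfCoinv

/-! ### Exactness -/

/-- If `π : C → B` is a surjective Hopf algebra morphism between
finite-dimensional Hopf algebras and `A = C^{co π}` is a Hopf subalgebra of `C`, then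
`dim C = dim A · dim B` and the sequence `A ↪ C ↠ B` is exact; in particular
`ker π = A⁺C`. -/
theorem hopf_exact_sequence_from_coinvariants
    (k : Type*) [Field k]
    (C : Type*) [Ring C] [HopfAlgebra k C] [FiniteDimensional k C]
    (B : Type*) [Ring B] [HopfAlgebra k B] [FiniteDimensional k B]
    (π : C →ₐc[k] B) (hπ : Function.Surjective π)
    (A : Subalgebra k C)
    (hA : ∀ c : C, c ∈ A ↔
      (TensorProduct.map (LinearMap.id : C →ₗ[k] C) π.toLinearMap)
        (Coalgebra.comul (R := k) c) = c ⊗ₜ[k] (1 : B))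
    (hAcoalg : IsSubcoalgebra k A.toSubmodule)
    (hAS : ∀ a ∈ A, HopfAlgebra.antipode (R := k) a ∈ A) :
    Module.finrank k C = Module.finrank k A * Module.finrank k B ∧
    (∀ a ∈ A, π a = algebraMap k B (Coalgebra.counit (R := k) a)) ∧
    (∀ z : C, π z = 0 ↔ z ∈ Submodule.span k
      {w : C | ∃ a ∈ A, ∃ c : C, Coalgebra.counit (R := k) a = (0 : k) ∧ w = a * c}) := by
  open HopfCoinv Coalgebra HopfAlgebra in
  have hAc : A.toSubmodule = coinv π := by
    ext c
    rw [mem_coinv, ← hA, Subalgebra.mem_toSubmodule]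
  have hmem : ∀ c, c ∈ A ↔ c ∈ coinv π := fun c => (hA c).trans (mem_coinv π).symm
  have hdim : Module.finrank k C = Module.finrank k A * Module.finrank k B := by
    rw [finrank_eq_mul_coinv π hπ, ← hAc, Subalgebra.finrank_toSubmodule]
  have hε : ∀ a ∈ A, π a = algebraMap k B (counit (R := k) a) :=
    fun a ha => apply_of_mem_coinv π ((hmem a).1 ha)
  refine ⟨hdim, hε, ?_⟩
  have had : ∀ a ∈ A, ∀ c : C,
      ∑ i ∈ (ℛ k c).index, (ℛ k c).left i * a * antipode k ((ℛ k c).right i) ∈ A :=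
    fun a ha c => (hmem _).2 (adjoint_mem_coinv π ((hmem a).1 ha) c)
  have hker : ∀ z ∈ augSpan A, π z = 0 := by
    have : augSpan A ≤ LinearMap.ker π.toLinearMap := by
      refine Submodule.span_le.2 ?_
      rintro _ ⟨a, ha, c, h0, rfl⟩
      change π (a * c) = 0
      rw [map_mul, hε a ha, h0, map_zero, zero_mul]
    exact fun z hz => this hz
  have := isHopfIdeal A had hAcoalg hAS
  let J := augIdeal A had
  let q : C →ₐc[k] C ⧸ J := Bialgebra.Quotient.mkBialgHom J
  have hq : Function.Surjective q := Ideal.Quotient.mk_surjective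
  let p : (C ⧸ J) →ₐ[k] B := Ideal.Quotient.liftₐ J (π : C →ₐ[k] B) hker
  have hpq : ∀ z, p (q z) = π z := fun _ => rfl
  have : FiniteDimensional k (C ⧸ J) := Module.Finite.of_surjective q.toLinearMap hq
  -- One inclusion holds because `π` factors through `q`, the other because `A` is a subcoalgebra.
  have hco : coinv q = A.toSubmodule := by
    ext c
    rw [Subalgebra.mem_toSubmodule]
    constructor
    · intro h
      have h1 := congrArg (LinearMap.lTensor C p.toLinearMap) ((mem_coinv q).1 h)
      rw [hA]
      rw [← LinearMap.comp_apply, LinearMap.lTensor, ← TensorProduct.map_comp] at h1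
      refine Eq.trans ?_ (h1.trans ?_)
      · rfl
      · simp
    · exact fun h => (mem_coinv q).2 (map_mk_comul A had hAcoalg h)
  -- The dimension formula for `q` has the same factor `dim A` as that for `π`.
  have hdim' : Module.finrank k C = Module.finrank k A * Module.finrank k (C ⧸ J) := by
    rw [finrank_eq_mul_coinv q hq, hco, Subalgebra.finrank_toSubmodule]
  have hntC : Nontrivial C := by
    refine ⟨⟨1, 0, fun h => one_ne_zero (α := k) ?_⟩⟩
    have : counit (R := k) (1 : C) = counit (R := k) (0 : C) := by rw [h]
    simp at this
  have hApos : 0 < Module.finrank k A := by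
    refine Nat.pos_of_ne_zero fun h => (Module.finrank_pos (R := k) (M := C)).ne' ?_
    rw [hdim, h, zero_mul]
  have heq : Module.finrank k (C ⧸ J) = Module.finrank k B :=
    Nat.eq_of_mul_eq_mul_left hApos (hdim'.symm.trans hdim)
  have hpsurj : Function.Surjective p.toLinearMap := fun b =>
    let ⟨c, hc⟩ := hπ b
    ⟨q c, hc⟩
  have hpinj := (LinearMap.injective_iff_surjective_of_finrank_eq_finrank heq).2 hpsurj
  refine fun z => ⟨fun hz => ?_, hker z⟩
  have h0 : q z = 0 := hpinj ((hpq z).trans (hz.trans (map_zero p.toLinearMap).symm))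
  exact (Ideal.Quotient.eq_zero_iff_mem (I := J)).1 h0
end

section
/- Let π: H → K be a morphism of finite-dimensional Hopf algebras with π(g) = 1 for some group-like g ≠ 1 of H, and suppose H is generated as an algebra by 1 and a 4-dimensional simple subcoalgebra C stable under left multiplication by g. Then π(H) is contained in the group algebra k[G(K)] spanned by the group-like elements of K. -/
/-!
Left multiplication by `g` is a coalgebra automorphism `f` of `C`. It has finite order because the
powers of `g` are group-like, hence linearly independent when distinct. It is not the identity: if
`g c = c` on `C`, then `ε(c) g = g c₁ S(c₂) = c₁ S(c₂) = ε(c)`, and `ε` does not vanish on `C`, so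
`g = 1`. Since `π(g) = 1`, the restriction `p` of `π` to `C` satisfies `p ∘ f = p`.

The dual algebra of `C` is simple of dimension `4` (`isSimpleRing_dual`), hence an algebra of
`2 × 2` matrices by Wedderburn. The transpose of `f` is conjugation by some `T` (Skolem-Noether),
diagonalizable since it has a scalar power and the characteristic is `0`. The basis of `C` dual to
the matrix units of an eigenbasis of `T` is a comatrix basis with `f e_ij = (a_i / a_j) e_ij` and
`a_0 ≠ a_1` (`exists_comatrix_basis`). Thus `p` kills `e_01` and `e_10`, and so sends `e_00` and
`e_11` to group-like elements (`coalgHom_apply_mem_span_groupLike`). So `π(C)` lies in the span of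
the group-likes of `K`, which is a subalgebra, and `C` generates `H`.
-/

open TensorProduct

/-- A subcoalgebra is simple if it is nonzero and has no proper nonzero subcoalgebras. -/
def IsSimpleSubcoalgebra (k : Type*) [CommRing k] {H : Type*} [AddCommGroup H] [Module k H]
    [Coalgebra k H] (C : Submodule k H) : Prop :=
  IsSubcoalgebra k C ∧ C ≠ ⊥ ∧
    ∀ C' : Submodule k H, C' ≤ C → IsSubcoalgebra k C' → C' = ⊥ ∨ C' = C

/-! ### Linear algebra -/

/-- In characteristic `0` the polynomial `X ^ n - c` is separable, so `T` is diagonalizable; as it is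
not a scalar it has two distinct eigenvalues, whose eigenvectors form a basis. -/
theorem exists_eigenbasis_of_pow_eq_smul {k V : Type*} [Field k] [IsAlgClosed k] [CharZero k]
    [AddCommGroup V] [Module k V] [FiniteDimensional k V] (hV : Module.finrank k V = 2)
    (T : Module.End k V) (n : ℕ) (hn : 0 < n) (c : k) (hc : c ≠ 0)
    (hT : ∀ v, (T ^ n) v = c • v) (hns : ¬ ∃ a : k, ∀ v, T v = a • v) :
    ∃ (v : Module.Basis (Fin 2) k V) (a : Fin 2 → k), a 0 ≠ a 1 ∧ ∀ i, T (v i) = a i • v i := by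
  have hss : T.IsSemisimple := by
    refine Module.End.isSemisimple_of_squarefree_aeval_eq_zero
      (p := Polynomial.X ^ n - Polynomial.C c)
      (Polynomial.separable_X_pow_sub_C c (by exact_mod_cast hn.ne') hc).squarefree ?_
    ext v
    simp [hT, Module.algebraMap_end_apply]
  have htop := hss.iSup_eigenspace_eq_top
  have hne : ∀ a, T.eigenspace a ≠ ⊤ := fun a h => hns ⟨a, fun v =>
    Module.End.mem_eigenspace_iff.1 (h ▸ Submodule.mem_top)⟩
  have : Nontrivial V := Module.nontrivial_of_finrank_pos (R := k) (by omega)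
  obtain ⟨a, ha⟩ := Module.End.exists_eigenvalue T
  obtain ⟨b, hb, hab⟩ : ∃ b, T.HasEigenvalue b ∧ a ≠ b := by
    by_contra! h
    refine hne a (top_le_iff.1 (htop ▸ iSup_le fun b => ?_))
    by_cases hb : T.HasEigenvalue b
    · rw [h b hb]
    · have : T.eigenspace b = ⊥ := by
        by_contra h'
        exact hb h'
      simp [this]
  obtain ⟨x, hx⟩ := ha.exists_hasEigenvector
  obtain ⟨y, hy⟩ := hb.exists_hasEigenvector
  have hinj : Function.Injective ![a, b] := by
    intro i j
    fin_cases i <;> fin_cases j <;> simp [hab, hab.symm]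
  have hev : ∀ i, T.HasEigenvector (![a, b] i) (![x, y] i) := by
    intro i
    fin_cases i
    · exact hx
    · exact hy
  have hli : LinearIndependent k ![x, y] :=
    Module.End.eigenvectors_linearIndependent' T ![a, b] hinj ![x, y] hev
  refine ⟨basisOfLinearIndependentOfCardEqFinrank hli (by simp [hV]), ![a, b], by simpa using hab,
    fun i => ?_⟩
  rw [coe_basisOfLinearIndependentOfCardEqFinrank]
  exact (hev i).apply_eq_smul

/-- A nontrivial automorphism `F` of finite order of the algebra of `2 × 2` matrices is diagonal on
a suitable system of matrix units: `F E_ij = (a_i / a_j) E_ij`. By Skolem-Noether `F` is conjugation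
by some `T`, a power of `T` is central, and one takes the matrix units of an eigenbasis of `T`. -/
theorem exists_matrixUnits_of_finite_order {k A : Type*} [Field k] [IsAlgClosed k] [CharZero k]
    [Ring A] [Algebra k A] (Φ : A ≃ₐ[k] Matrix (Fin 2) (Fin 2) k)
    (F : A ≃ₐ[k] A) (n : ℕ) (hn : 0 < n) (hF : ∀ x, F^[n] x = x) (hF1 : ∃ x, F x ≠ x) :
    ∃ (Ψ : A ≃ₐ[k] Matrix (Fin 2) (Fin 2) k) (a : Fin 2 → k), a 0 ≠ a 1 ∧ (∀ i, a i ≠ 0) ∧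
      ∀ i j, a j • F (Ψ.symm (Matrix.single i j 1)) = a i • Ψ.symm (Matrix.single i j 1) := by
  let Φ' : A ≃ₐ[k] Module.End k (Fin 2 → k) := Φ.trans Matrix.toLinAlgEquiv'
  obtain ⟨T, hT⟩ := AlgEquiv.eq_linearEquivConjAlgEquiv ((Φ'.symm.trans F).trans Φ')
  let T' : Module.End k (Fin 2 → k) := T.toLinearMap
  -- `hcomm` is `F x = T x T⁻¹`, read through `Φ'`.
  have hinv : ∀ v, T' v = 0 → v = 0 := fun v hv => T.map_eq_zero_iff.1 hv
  have hcomm : ∀ x, Φ' (F x) * T' = T' * Φ' x := by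
    intro x
    have := congr($hT (Φ' x))
    simp only [AlgEquiv.trans_apply, AlgEquiv.symm_apply_apply, LinearEquiv.conjAlgEquiv_apply]
      at this
    refine LinearMap.ext fun v => ?_
    simp [this, T', Module.End.mul_apply]
  have hiter : ∀ m x, Φ' (F^[m] x) * T' ^ m = T' ^ m * Φ' x := by
    intro m
    induction m with
    | zero => intro x; simp
    | succ m ih =>
      intro x
      rw [Function.iterate_succ_apply, pow_succ, ← mul_assoc, ih, mul_assoc, hcomm, mul_assoc]
  have hcen : T' ^ n ∈ Subalgebra.center k (Module.End k (Fin 2 → k)) := by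
    rw [Subalgebra.mem_center_iff]
    intro X
    have := hiter n (Φ'.symm X)
    rwa [hF, AlgEquiv.apply_symm_apply] at this
  obtain ⟨c, hc⟩ : ∃ c : k, ∀ v, (T' ^ n) v = c • v := by
    rw [Algebra.IsCentral.center_eq_bot, Algebra.mem_bot] at hcen
    obtain ⟨c, hc⟩ := hcen
    exact ⟨c, fun v => by rw [← hc, Module.algebraMap_end_apply]⟩
  have hc0 : c ≠ 0 := by
    rintro rfl
    have h1 : ∀ m, ∀ v, (T' ^ m) v = 0 → v = 0 := by
      intro m
      induction m with
      | zero => intro v; simp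
      | succ m ih =>
        intro v hv
        rw [pow_succ, Module.End.mul_apply] at hv
        exact hinv _ (ih _ hv)
    have := h1 n (fun _ => 1) (by simp [hc])
    simpa using congrFun this 0
  have hns : ¬ ∃ a : k, ∀ v, T' v = a • v := by
    rintro ⟨a, ha⟩
    obtain ⟨x, hx⟩ := hF1
    apply hx
    apply Φ'.injective
    have ha0 : a ≠ 0 := by
      rintro rfl
      have := hinv (fun _ => 1) (by simp [ha])
      simpa using congrFun this 0
    refine LinearMap.ext fun v => ?_
    have := congr($(hcomm x) v)
    simp only [Module.End.mul_apply, ha, map_smul] at this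
    exact smul_right_injective _ ha0 this
  obtain ⟨v, a, hab, hv⟩ := exists_eigenbasis_of_pow_eq_smul (by simp) T' n hn c hc0 hc hns
  have ha0 : ∀ i, a i ≠ 0 := fun i hi => v.ne_zero i (hinv _ (by rw [hv, hi, zero_smul]))
  refine ⟨Φ'.trans (LinearMap.toMatrixAlgEquiv v), a, hab, ha0, fun i j => ?_⟩
  set x := (Φ'.trans (LinearMap.toMatrixAlgEquiv v)).symm (Matrix.single i j 1) with hx
  have hxv : ∀ l, Φ' x (v l) = if j = l then v i else 0 := by
    intro l
    have : Φ' x = Matrix.toLinAlgEquiv v (Matrix.single i j 1) := by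
      rw [hx, AlgEquiv.symm_trans_apply, AlgEquiv.apply_symm_apply, LinearMap.toMatrixAlgEquiv_symm]
    rw [this, Matrix.toLinAlgEquiv_self]
    simp [Matrix.single_apply, ite_and]
  apply Φ'.injective
  refine v.ext fun l => ?_
  apply smul_right_injective _ (ha0 l)
  have := congr($(hcomm x) (v l))
  simp only [Module.End.mul_apply, hv, map_smul, hxv] at this
  simp only [map_smul, LinearMap.smul_apply, hxv]
  rw [smul_comm, this]
  split_ifs with h
  · subst h; simp [hv]
  · simp

/-- A tensor is determined by its values under `b_i* ⊗ b_j*`, for the dual basis `b*`. -/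
theorem tensor_ext_of_basis {k M ι : Type*} [Field k] [AddCommGroup M] [Module k M]
    (b : Module.Basis ι k M) {s t : M ⊗[k] M}
    (h : ∀ i j, LinearMap.mul' k k (TensorProduct.map (b.coord i) (b.coord j) s) =
      LinearMap.mul' k k (TensorProduct.map (b.coord i) (b.coord j) t)) : s = t := by
  refine (b.tensorProduct b).ext_elem fun ⟨p, q⟩ => ?_
  have key : ∀ u : M ⊗[k] M, (b.tensorProduct b).repr u (p, q) =
      LinearMap.mul' k k (TensorProduct.map (b.coord p) (b.coord q) u) := by
    intro u
    induction u with
    | zero => simp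
    | add x y hx hy => simp [hx, hy]
    | tmul x y => simp [Module.Basis.tensorProduct_repr_tmul_apply, mul_comm]
  rw [key, key, h]

/-! ### Coalgebras -/

section

open Coalgebra WithConv

/-- The coalgebra structure on a subcoalgebra `C`. The restricted comultiplication is obtained by
composing with `r ⊗ r` for a linear retraction `r : H → C`; it does not depend on `r`, since
`C ⊗ C → H ⊗ H` is injective. -/
@[reducible]
noncomputable def IsSubcoalgebra.coalgebra {k H : Type*} [Field k] [AddCommGroup H] [Module k H]
    [Coalgebra k H] {C : Submodule k H} (hC : IsSubcoalgebra k C) : Coalgebra k C :=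
  let i := C.subtype
  let r := (C.subtype.exists_leftInverse_of_injective C.ker_subtype).choose
  have hr : r ∘ₗ i = LinearMap.id :=
    (C.subtype.exists_leftInverse_of_injective C.ker_subtype).choose_spec
  let Δ : C →ₗ[k] C ⊗[k] C := TensorProduct.map r r ∘ₗ comul ∘ₗ i
  have hΔ : TensorProduct.map i i ∘ₗ Δ = comul ∘ₗ i := by
    ext c
    obtain ⟨s, hs⟩ := hC c c.2
    have : comul (i c) = TensorProduct.map i i s := hs.symm
    simp only [Δ, LinearMap.comp_apply, this]
    rw [← LinearMap.comp_apply (TensorProduct.map r r), ← TensorProduct.map_comp, hr,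
      TensorProduct.map_id, LinearMap.id_apply]
  have hi : Function.Injective i := C.injective_subtype
  have hR : comul.rTensor H ∘ₗ TensorProduct.map i i =
      TensorProduct.map (TensorProduct.map i i ∘ₗ Δ) i := by
    rw [hΔ, LinearMap.rTensor, ← TensorProduct.map_comp, LinearMap.id_comp]
  have hL : comul.lTensor H ∘ₗ TensorProduct.map i i =
      TensorProduct.map i (TensorProduct.map i i ∘ₗ Δ) := by
    rw [hΔ, LinearMap.lTensor, ← TensorProduct.map_comp, LinearMap.id_comp]
  have hεR : LinearMap.lTensor k i ∘ₗ (counit ∘ₗ i).rTensor C =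
      (counit (R := k)).rTensor H ∘ₗ TensorProduct.map i i := by
    ext; simp
  have hεL : LinearMap.rTensor k i ∘ₗ (counit ∘ₗ i).lTensor C =
      (counit (R := k)).lTensor H ∘ₗ TensorProduct.map i i := by
    ext; simp
  { comul := Δ
    counit := counit ∘ₗ i
    coassoc := by
      have h3 : Function.Injective (TensorProduct.map i (TensorProduct.map i i)) := by
        refine Function.LeftInverse.injective (g := TensorProduct.map r (TensorProduct.map r r))
          fun t => ?_
        rw [← LinearMap.comp_apply]
        simp only [← TensorProduct.map_comp, hr, TensorProduct.map_id, LinearMap.id_apply]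
      rw [← LinearMap.cancel_left h3]
      calc _ = (TensorProduct.assoc k H H H).toLinearMap ∘ₗ
            TensorProduct.map (TensorProduct.map i i ∘ₗ Δ) i ∘ₗ Δ := by
              simp only [← LinearMap.comp_assoc]
              congr 1
              ext x y
              simp only [LinearMap.rTensor, TensorProduct.AlgebraTensorModule.curry_apply,
                TensorProduct.curry_apply, LinearMap.coe_restrictScalars, LinearMap.comp_apply,
                TensorProduct.map_tmul, LinearMap.id_apply, LinearEquiv.coe_coe]
              generalize Δ x = t
              induction t with
              | zero => simp
              | add a b ha hb => simp only [TensorProduct.add_tmul, map_add, ha, hb]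
              | tmul a b => simp
        _ = ((TensorProduct.assoc k H H H).toLinearMap ∘ₗ comul.rTensor H ∘ₗ comul) ∘ₗ i := by
              rw [← hR, LinearMap.comp_assoc, hΔ]
              rfl
        _ = comul.lTensor H ∘ₗ TensorProduct.map i i ∘ₗ Δ := by
              rw [hΔ, Coalgebra.coassoc, LinearMap.comp_assoc]
        _ = TensorProduct.map i (TensorProduct.map i i) ∘ₗ
            TensorProduct.map LinearMap.id Δ ∘ₗ Δ := by
              rw [← LinearMap.comp_assoc, hL, ← LinearMap.comp_assoc Δ (TensorProduct.map _ _),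
                ← TensorProduct.map_comp, LinearMap.comp_id]
        _ = _ := rfl
    rTensor_counit_comp_comul := by
      have h2 : Function.Injective (LinearMap.lTensor k i) :=
        Module.Flat.lTensor_preserves_injective_linearMap i hi
      rw [← LinearMap.cancel_left h2]
      rw [← LinearMap.comp_assoc, hεR, LinearMap.comp_assoc, hΔ, ← LinearMap.comp_assoc,
        Coalgebra.rTensor_counit_comp_comul]
      ext; simp
    lTensor_counit_comp_comul := by
      have h2 : Function.Injective (LinearMap.rTensor k i) :=
        Module.Flat.rTensor_preserves_injective_linearMap i hi
      rw [← LinearMap.cancel_left h2]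
      rw [← LinearMap.comp_assoc, hεL, LinearMap.comp_assoc, hΔ, ← LinearMap.comp_assoc,
        Coalgebra.lTensor_counit_comp_comul]
      ext; simp }

theorem IsSubcoalgebra.map_subtype_comul {k H : Type*} [Field k] [AddCommGroup H] [Module k H]
    [Coalgebra k H] {C : Submodule k H} (hC : IsSubcoalgebra k C) (c : C) :
    letI := hC.coalgebra
    TensorProduct.map C.subtype C.subtype (comul (R := k) c) = comul (R := k) (c : H) := by
  have hr : (C.subtype.exists_leftInverse_of_injective C.ker_subtype).choose ∘ₗ C.subtype =
      LinearMap.id := (C.subtype.exists_leftInverse_of_injective C.ker_subtype).choose_spec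
  obtain ⟨s, hs⟩ := hC c c.2
  change TensorProduct.map C.subtype C.subtype (TensorProduct.map _ _ (comul (R := k) (c : H))) = _
  rw [← hs, ← LinearMap.comp_apply (TensorProduct.map _ _) (TensorProduct.map _ _) s,
    ← TensorProduct.map_comp, hr, TensorProduct.map_id, LinearMap.id_apply]

/-- The inclusion of a subcoalgebra, as a coalgebra morphism. -/
noncomputable def IsSubcoalgebra.incl {k H : Type*} [Field k] [AddCommGroup H] [Module k H]
    [Coalgebra k H] {C : Submodule k H} (hC : IsSubcoalgebra k C) :
    letI := hC.coalgebra
    C →ₗc[k] H :=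
  letI := hC.coalgebra
  { C.subtype with
    counit_comp := rfl
    map_comp_comul := LinearMap.ext fun c => hC.map_subtype_comul c }

/-- If `C` has no proper nonzero subcoalgebras, then its dual algebra is simple. -/
theorem isSimpleRing_dual {k C : Type*} [Field k] [AddCommGroup C] [Module k C] [Coalgebra k C]
    [FiniteDimensional k C] [Nontrivial C]
    (hC : ∀ C' : Submodule k C, IsSubcoalgebra k C' → C' = ⊥ ∨ C' = ⊤) :
    IsSimpleRing (WithConv (C →ₗ[k] k)) := by
  have hnt : Nontrivial (WithConv (C →ₗ[k] k)) :=
    inferInstanceAs (Nontrivial (WithConv (Module.Dual k C)))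
  refine ⟨{ eq_bot_or_eq_top := fun I => ?_ }⟩
  let W : Submodule k (Module.Dual k C) :=
    { carrier := {φ | toConv φ ∈ I}
      add_mem' := fun {a b} ha hb => I.add_mem ha hb
      zero_mem' := I.zero_mem
      smul_mem' := fun c φ hφ => by
        have := I.mul_mem_left (algebraMap k _ c) _ hφ
        rwa [← Algebra.smul_def] at this }
  have hWI : ∀ φ, φ ∈ W ↔ toConv φ ∈ I := fun φ => Iff.rfl
  -- The orthogonal `N ⊆ C` of the ideal `I` is a subcoalgebra.
  let N := W.dualCoannihilator
  have hNW : N.dualAnnihilator = W := Subspace.dualCoannihilator_dualAnnihilator_eq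
  have hsub : IsSubcoalgebra k N := by
    intro c hc
    obtain ⟨r, hr⟩ := N.subtype.exists_leftInverse_of_injective N.ker_subtype
    -- `P` is a projection onto `N`, and functionals factoring through `Q = 1 - P` lie in `I`.
    let P : C →ₗ[k] C := N.subtype ∘ₗ r
    let Q : C →ₗ[k] C := LinearMap.id - P
    have hQW : ∀ ψ : Module.Dual k C, ψ ∘ₗ Q ∈ W := by
      intro ψ
      rw [← hNW, Submodule.mem_dualAnnihilator]
      intro w hw
      have : r w = ⟨w, hw⟩ := congr($hr ⟨w, hw⟩)
      simp [Q, P, this]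
    have hcW : ∀ φ, toConv φ ∈ I → φ c = 0 := fun φ hφ =>
      (Submodule.mem_dualCoannihilator _).1 hc φ hφ
    have hmul : ∀ φ ψ : Module.Dual k C, (φ ∈ W ∨ ψ ∈ W) →
        LinearMap.mul' k k (TensorProduct.map φ ψ (comul (R := k) c)) = 0 := by
      rintro φ ψ (h | h)
      · exact hcW _ (I.mul_mem_right _ (toConv ψ) h)
      · exact hcW _ (I.mul_mem_left (toConv φ) _ h)
    let b := Module.finBasis k C
    have h1 : TensorProduct.map Q LinearMap.id (comul (R := k) c) = 0 := by
      refine tensor_ext_of_basis b fun i j => ?_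
      rw [← LinearMap.comp_apply (TensorProduct.map _ _), ← TensorProduct.map_comp, map_zero,
        map_zero]
      exact hmul _ _ (Or.inl (hQW _))
    have h2 : TensorProduct.map P Q (comul (R := k) c) = 0 := by
      refine tensor_ext_of_basis b fun i j => ?_
      rw [← LinearMap.comp_apply (TensorProduct.map _ _), ← TensorProduct.map_comp, map_zero,
        map_zero]
      exact hmul _ _ (Or.inr (hQW _))
    have h3 : comul (R := k) c = TensorProduct.map P P (comul (R := k) c) := by
      have hid : (LinearMap.id : C →ₗ[k] C) = Q + P := by simp [Q]
      calc comul (R := k) c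
          = TensorProduct.map (Q + P) LinearMap.id (comul (R := k) c) := by
            rw [← hid, TensorProduct.map_id, LinearMap.id_apply]
        _ = TensorProduct.map P (Q + P) (comul (R := k) c) := by
            rw [TensorProduct.map_add_left, LinearMap.add_apply, h1, zero_add, ← hid]
        _ = _ := by rw [TensorProduct.map_add_right, LinearMap.add_apply, h2, zero_add]
    refine ⟨TensorProduct.map r r (comul (R := k) c), ?_⟩
    rw [← LinearMap.comp_apply, ← TensorProduct.map_comp]
    exact h3.symm
  rcases hC N hsub with h | h
  · right
    rw [h, Submodule.dualAnnihilator_bot] at hNW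
    rw [← TwoSidedIdeal.one_mem_iff]
    have : (1 : WithConv (C →ₗ[k] k)).ofConv ∈ W := hNW ▸ Submodule.mem_top
    exact this
  · left
    rw [h, Submodule.dualAnnihilator_top] at hNW
    rw [eq_bot_iff]
    intro x hx
    have : x.ofConv ∈ W := hx
    rw [← hNW, Submodule.mem_bot] at this
    rw [TwoSidedIdeal.mem_bot]
    exact WithConv.ext this

end

/-! ### Comatrix bases -/

section

open Coalgebra WithConv

/-- Stefan's theorem, without the normalization of the eigenvalues: a simple `4`-dimensional
coalgebra with a nontrivial automorphism `f` of finite order has a comatrix basis `e` with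
`f e_ij = (a_i / a_j) e_ij` and `a_0 ≠ a_1`. It is the basis dual to matrix units of the dual algebra
on which the transpose of `f` acts diagonally. -/
theorem exists_comatrix_basis {k C : Type*} [Field k] [IsAlgClosed k] [CharZero k]
    [AddCommGroup C] [Module k C] [Coalgebra k C] (hdim : Module.finrank k C = 4)
    (hC : ∀ C' : Submodule k C, IsSubcoalgebra k C' → C' = ⊥ ∨ C' = ⊤)
    (f : C →ₗc[k] C) (n : ℕ) (hn : 0 < n) (hf : ∀ c, f^[n] c = c) (hf1 : ∃ c, f c ≠ c) :
    ∃ (e : Module.Basis (Fin 2 × Fin 2) k C) (a : Fin 2 → k), a 0 ≠ a 1 ∧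
      (∀ i j, comul (R := k) (e (i, j)) = ∑ l, e (i, l) ⊗ₜ[k] e (l, j)) ∧
      (∀ i, counit (R := k) (e (i, i)) = 1) ∧
      ∀ i j, a j • f (e (i, j)) = a i • e (i, j) := by
  have hfd : FiniteDimensional k C := Module.finite_of_finrank_pos (by omega)
  have hnt : Nontrivial C := Module.nontrivial_of_finrank_pos (R := k) (by omega)
  have hsimple := isSimpleRing_dual hC
  have hfd' : FiniteDimensional k (WithConv (C →ₗ[k] k)) :=
    Module.Finite.equiv (WithConv.linearEquiv k (C →ₗ[k] k)).symm
  obtain ⟨m, _, ⟨Φ⟩⟩ :=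
    IsSimpleRing.exists_algEquiv_matrix_of_isAlgClosed k (WithConv (C →ₗ[k] k))
  have hm : m = 2 := by
    have h1 := Φ.toLinearEquiv.finrank_eq
    have h2 : Module.finrank k (C →ₗ[k] k) = 4 := by
      rw [← hdim]; exact Subspace.dual_finrank_eq
    rw [(WithConv.linearEquiv k (C →ₗ[k] k)).finrank_eq, h2, Module.finrank_matrix] at h1
    simp at h1
    nlinarith
  subst hm
  -- The transpose of `f` is an automorphism of the dual algebra.
  let F₀ : WithConv (C →ₗ[k] k) →ₐ[k] WithConv (C →ₗ[k] k) :=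
    AlgHom.ofLinearMap
      { toFun := fun φ => toConv (φ.ofConv ∘ₗ f.toLinearMap)
        map_add' := fun _ _ => rfl
        map_smul' := fun _ _ => rfl }
      (by
        ext c
        simp [LinearMap.convOne_def])
      (fun φ ψ => WithConv.ext (LinearMap.convMul_comp_coalgHom_distrib φ ψ f))
  have hF₀ : ∀ φ c, (F₀ φ).ofConv c = φ.ofConv (f c) := fun _ _ => rfl
  have hiter : ∀ m φ c, (F₀^[m] φ).ofConv c = φ.ofConv (f^[m] c) := by
    intro m
    induction m with
    | zero => intro φ c; rfl
    | succ m ih =>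
      intro φ c
      rw [Function.iterate_succ_apply, ih, hF₀, ← Function.iterate_succ_apply' f]
  have hFn : ∀ φ, F₀^[n] φ = φ := fun φ =>
    WithConv.ext (LinearMap.ext fun c => by rw [hiter, hf])
  have hbij : Function.Bijective F₀ := by
    obtain ⟨m, rfl⟩ : ∃ m, n = m + 1 := ⟨n - 1, by omega⟩
    refine ⟨fun φ ψ h => ?_, fun φ => ⟨F₀^[m] φ, ?_⟩⟩
    · rw [← hFn φ, ← hFn ψ, Function.iterate_succ_apply, Function.iterate_succ_apply, h]
    · rw [← Function.iterate_succ_apply' F₀, hFn]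
  let F := AlgEquiv.ofBijective F₀ hbij
  have hF1 : ∃ φ, F φ ≠ φ := by
    by_contra! h
    obtain ⟨c, hc⟩ := hf1
    apply hc
    rw [← sub_eq_zero, ← Module.forall_dual_apply_eq_zero_iff k]
    intro φ
    have := congr(($(h (toConv φ))).ofConv c)
    rw [map_sub, sub_eq_zero]
    exact this
  obtain ⟨Ψ, a, hab, ha0, hΨ⟩ := exists_matrixUnits_of_finite_order Φ F n hn hFn hF1
  let E : Module.Basis (Fin 2 × Fin 2) k (Module.Dual k C) :=
    ((Matrix.stdBasis k (Fin 2) (Fin 2)).map Ψ.symm.toLinearEquiv).map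
      (WithConv.linearEquiv k (C →ₗ[k] k))
  have hE : ∀ i j, toConv (E (i, j)) = Ψ.symm (Matrix.single i j 1) := by
    intro i j
    simp only [E, Module.Basis.map_apply, Matrix.stdBasis_eq_single]
    rfl
  -- `e` is the basis of `C` whose dual basis is `E`.
  let e : Module.Basis (Fin 2 × Fin 2) k C := E.dualBasis.map (Module.evalEquiv k C).symm
  have hEe : ∀ p q, E p (e q) = if p = q then 1 else 0 := by
    intro p q
    simp only [e, Module.Basis.map_apply]
    rw [Module.apply_evalEquiv_symm_apply, Module.Basis.dualBasis_apply_self]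
  have hcoord : ∀ p, e.coord p = E p := by
    intro p
    refine e.ext fun q => ?_
    rw [hEe, Module.Basis.coord_apply, Module.Basis.repr_self, Finsupp.single_apply]
    simp only [eq_comm]
  have hmul : ∀ p q c, LinearMap.mul' k k (TensorProduct.map (E p) (E q) (comul (R := k) c)) =
      if p.2 = q.1 then E (p.1, q.2) c else 0 := by
    rintro ⟨i, j⟩ ⟨l, m⟩ c
    change (toConv (E (i, j)) * toConv (E (l, m))).ofConv c = _
    rw [hE, hE, ← map_mul]
    split_ifs with h
    · simp only at h
      subst h
      rw [Matrix.single_mul_single_same, mul_one, ← hE]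
    · rw [Matrix.single_mul_single_of_ne _ _ _ _ h, map_zero]
      rfl
  refine ⟨e, a, hab, fun i j => ?_, fun i => ?_, fun i j => ?_⟩
  · refine tensor_ext_of_basis e fun p q => ?_
    rw [hcoord, hcoord, hmul, hEe, map_sum, map_sum]
    simp only [TensorProduct.map_tmul, LinearMap.mul'_apply, hEe]
    obtain ⟨p1, p2⟩ := p
    obtain ⟨q1, q2⟩ := q
    simp only [Prod.mk.injEq]
    fin_cases p2 <;> fin_cases q1 <;> simp [ite_and] <;> split_ifs <;> rfl
  · have h1 : (1 : WithConv (C →ₗ[k] k)) = ∑ l, toConv (E (l, l)) := by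
      simp only [hE, ← map_sum]
      rw [Matrix.sum_single_one, map_one]
    have h2 := congr(($h1).ofConv (e (i, i)))
    have h3 : (1 : WithConv (C →ₗ[k] k)).ofConv (e (i, i)) = counit (R := k) (e (i, i)) := rfl
    rw [← h3, h2]
    fin_cases i <;> simp [Fin.sum_univ_two, hEe]
  · refine e.ext_elem fun p => ?_
    rw [← Module.Basis.coord_apply, ← Module.Basis.coord_apply, hcoord, map_smul, map_smul, hEe]
    have := congr(($(hΨ p.1 p.2)).ofConv (e (i, j)))
    rw [← hE] at this
    change a p.2 • E p (f (e (i, j))) = a p.1 • E p (e (i, j)) at this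
    rw [hEe] at this
    split_ifs at this ⊢ with h
    · subst h
      exact this
    · rw [smul_zero, smul_eq_zero_iff_right (ha0 _)] at this
      rw [this, smul_zero, smul_zero]

/-- In the comatrix basis, `p e_ij = p (f e_ij) = (a_i / a_j) p e_ij`, so `p` kills the off-diagonal
elements, and therefore the diagonal ones have group-like image. -/
theorem coalgHom_apply_mem_span_groupLike {k C K : Type*} [Field k] [IsAlgClosed k] [CharZero k]
    [AddCommGroup C] [Module k C] [Coalgebra k C] (hdim : Module.finrank k C = 4)
    (hC : ∀ C' : Submodule k C, IsSubcoalgebra k C' → C' = ⊥ ∨ C' = ⊤)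
    (f : C →ₗc[k] C) (n : ℕ) (hn : 0 < n) (hf : ∀ c, f^[n] c = c) (hf1 : ∃ c, f c ≠ c)
    [AddCommGroup K] [Module k K] [Coalgebra k K] (p : C →ₗc[k] K) (hp : ∀ c, p (f c) = p c)
    (c : C) : p c ∈ Submodule.span k {y : K | IsGroupLikeElem k y} := by
  obtain ⟨e, a, hab, hΔ, hε, he⟩ := exists_comatrix_basis hdim hC f n hn hf hf1
  have hoff : ∀ i j, i ≠ j → p (e (i, j)) = 0 := by
    intro i j hij
    have h1 := congr(p $(he i j))
    rw [map_smul, map_smul, hp, ← sub_eq_zero, ← sub_smul, smul_eq_zero] at h1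
    refine h1.resolve_left fun h2 => ?_
    rw [sub_eq_zero] at h2
    fin_cases i <;> fin_cases j
    · exact hij rfl
    · exact hab h2.symm
    · exact hab h2
    · exact hij rfl
  have hdiag : ∀ i, IsGroupLikeElem k (p (e (i, i))) := by
    intro i
    refine ⟨by rw [CoalgHomClass.counit_comp_apply, hε], ?_⟩
    rw [← CoalgHomClass.map_comp_comul_apply, hΔ, map_sum, Finset.sum_eq_single i]
    · simp
    · intro l _ hl
      simp [hoff l i hl]
    · simp
  rw [← e.sum_repr c, map_sum]
  refine Submodule.sum_mem _ fun q _ => ?_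
  rw [map_smul]
  refine Submodule.smul_mem _ _ ?_
  obtain ⟨i, j⟩ := q
  by_cases hij : i = j
  · subst hij
    exact Submodule.subset_span (hdiag i)
  · rw [hoff i j hij]
    exact Submodule.zero_mem _

end

/-! ### Group-like elements -/

/-- The powers of a group-like element of a finite-dimensional Hopf algebra are group-like, hence
cannot be pairwise distinct, as distinct group-likes are linearly independent. -/
theorem exists_pow_eq_one_of_isGroupLikeElem {k H : Type*} [Field k] [Ring H] [HopfAlgebra k H]
    [FiniteDimensional k H] {g : H} (hg : IsGroupLikeElem k g) : ∃ n, 0 < n ∧ g ^ n = 1 := by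
  have hfin : Set.Finite {a : H | IsGroupLikeElem k a} :=
    (linearIndepOn_isGroupLikeElem (R := k) (A := H)).finite
  have hninj : ¬ Function.Injective (fun n : ℕ => g ^ n) := fun h =>
    Set.infinite_range_of_injective h (hfin.subset (by rintro _ ⟨n, rfl⟩; exact hg.pow))
  simp only [Function.Injective, not_forall] at hninj
  obtain ⟨a, b, hab, hne⟩ := hninj
  have hu : IsUnit g := hg.isUnit
  have aux : ∀ a b : ℕ, a < b → g ^ a = g ^ b → ∃ n, 0 < n ∧ g ^ n = 1 := by
    intro a b hlt h
    refine ⟨b - a, by omega, ?_⟩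
    rw [← Nat.add_sub_cancel' hlt.le, pow_add] at h
    exact ((hu.pow a).mul_eq_left.1 h.symm)
  rcases lt_or_gt_of_ne hne with h | h
  · exact aux a b h hab
  · exact aux b a h hab.symm

/-! ### The image of `π` -/

/-- Let `π : H → K` be a morphism of finite-dimensional Hopf algebras with
`π(g) = 1` for some group-like `g ≠ 1` of `H`, and suppose `H` is generated as an algebra by
`1` and a 4-dimensional simple subcoalgebra `C` stable under left multiplication by `g`.
Then `π(H)` is contained in the span `k[G(K)]` of the group-like elements of `K`. -/
theorem image_in_span_of_grouplikes
    (k : Type*) [Field k] [IsAlgClosed k] [CharZero k]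
    (H : Type*) [Ring H] [HopfAlgebra k H] [FiniteDimensional k H]
    (K : Type*) [Ring K] [HopfAlgebra k K] [FiniteDimensional k K]
    (π : H →ₐc[k] K)
    (g : H) (hgl : Coalgebra.comul (R := k) g = g ⊗ₜ[k] g)
    (hgε : Coalgebra.counit (R := k) g = (1 : k))
    (hgne : g ≠ 1) (hπg : π g = 1)
    (C : Submodule k H) (hC : IsSimpleSubcoalgebra k C)
    (hdim : Module.finrank k C = 4)
    (hstab : ∀ c ∈ C, g * c ∈ C)
    (hgen : Algebra.adjoin k (C : Set H) = ⊤) :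
    ∀ h : H, π h ∈ Submodule.span k
      {y : K | Coalgebra.comul (R := k) y = y ⊗ₜ[k] y ∧ Coalgebra.counit (R := k) y = (1 : k)} := by
  have hg : IsGroupLikeElem k g := ⟨hgε, hgl⟩
  obtain ⟨hsub, hC0, hmin⟩ := hC
  let _ := hsub.coalgebra
  have hset : {y : K | Coalgebra.comul (R := k) y = y ⊗ₜ[k] y ∧
      Coalgebra.counit (R := k) y = (1 : k)} = {y : K | IsGroupLikeElem k y} := by
    ext y
    exact ⟨fun h => ⟨h.2, h.1⟩, fun h => ⟨h.2, h.1⟩⟩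
  rw [hset]
  -- Left multiplication by `g` as a coalgebra endomorphism of `C`.
  have hLcomul : ∀ x : H, Coalgebra.comul (R := k) (g * x) =
      TensorProduct.map (LinearMap.mulLeft k g) (LinearMap.mulLeft k g)
        (Coalgebra.comul (R := k) x) := by
    intro x
    rw [Bialgebra.comul_mul, hgl]
    generalize Coalgebra.comul (R := k) x = t
    induction t with
    | zero => simp
    | add a b ha hb => rw [mul_add, ha, hb, map_add]
    | tmul a b => simp
  let L : C →ₗ[k] C := (LinearMap.mulLeft k g).restrict hstab
  have hι : Function.Injective (TensorProduct.map C.subtype C.subtype) := by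
    obtain ⟨r, hr⟩ := C.subtype.exists_leftInverse_of_injective C.ker_subtype
    refine Function.LeftInverse.injective (g := TensorProduct.map r r) fun t => ?_
    rw [← LinearMap.comp_apply, ← TensorProduct.map_comp, hr, TensorProduct.map_id,
      LinearMap.id_apply]
  let f : C →ₗc[k] C :=
    { L with
      counit_comp := by
        ext c
        change Coalgebra.counit (R := k) (g * (c : H)) = Coalgebra.counit (R := k) (c : H)
        rw [Bialgebra.counit_mul, hgε, one_mul]
      map_comp_comul := by
        refine LinearMap.ext fun c => hι ?_
        change TensorProduct.map C.subtype C.subtype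
          (TensorProduct.map L L (Coalgebra.comul (R := k) c)) =
            TensorProduct.map C.subtype C.subtype (Coalgebra.comul (R := k) (L c))
        rw [hsub.map_subtype_comul]
        change _ = Coalgebra.comul (R := k) (g * (c : H))
        rw [hLcomul, ← hsub.map_subtype_comul,
          ← LinearMap.comp_apply (TensorProduct.map _ _) (TensorProduct.map _ _),
          ← LinearMap.comp_apply (TensorProduct.map _ _) (TensorProduct.map _ _),
          ← TensorProduct.map_comp, ← TensorProduct.map_comp]
        rfl }
  have hfc : ∀ c, ((f c : C) : H) = g * c := fun _ => rfl
  have hfm : ∀ m c, ((f^[m] c : C) : H) = g ^ m * c := by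
    intro m
    induction m with
    | zero => intro c; simp
    | succ m ih =>
      intro c
      rw [Function.iterate_succ_apply, ih, hfc, pow_succ, mul_assoc]
  obtain ⟨n, hn, hgn⟩ := exists_pow_eq_one_of_isGroupLikeElem hg
  have hfn : ∀ c, f^[n] c = c := fun c => Subtype.ext (by rw [hfm, hgn, one_mul])
  have hf1 : ∃ c, f c ≠ c := by
    by_contra! h
    -- If `g * c = c` on `C`, then `ε(c) g = g * c₁ * S(c₂) = c₁ * S(c₂) = ε(c)`.
    obtain ⟨c, hc, hc0⟩ := C.ne_bot_iff.1 hC0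
    have hfix : ∀ x ∈ C, g * x = x := fun x hx => congr(($(h ⟨x, hx⟩) : H))
    have hε : ∀ x ∈ C, Coalgebra.counit (R := k) x = 0 := by
      intro x hx
      have h1 : LinearMap.mul' k H ((HopfAlgebra.antipode k).lTensor H
          (Coalgebra.comul (R := k) x)) = algebraMap k H (Coalgebra.counit (R := k) x) :=
        HopfAlgebra.mul_antipode_lTensor_comul_apply x
      have h2 : ∀ t : C ⊗[k] C, g * LinearMap.mul' k H ((HopfAlgebra.antipode k).lTensor H
          (TensorProduct.map C.subtype C.subtype t)) =
          LinearMap.mul' k H ((HopfAlgebra.antipode k).lTensor H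
            (TensorProduct.map C.subtype C.subtype t)) := by
        intro t
        induction t with
        | zero => simp
        | add a b ha hb => simp only [map_add, mul_add, ha, hb]
        | tmul a b => simp [← mul_assoc, hfix a a.2]
      obtain ⟨t, ht⟩ := hsub x hx
      have h3 := h2 t
      rw [ht, h1, ← sub_eq_zero, ← sub_one_mul, ← Algebra.commutes, ← Algebra.smul_def,
        smul_eq_zero, sub_eq_zero] at h3
      exact h3.resolve_right hgne
    have h1 := Coalgebra.rTensor_counit_comul (R := k) c
    obtain ⟨t, ht⟩ := hsub c hc
    have h2 : ∀ t : C ⊗[k] C,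
        (Coalgebra.counit (R := k)).rTensor H (TensorProduct.map C.subtype C.subtype t) = 0 := by
      intro t
      induction t with
      | zero => simp
      | add a b ha hb => simp only [map_add, ha, hb, add_zero]
      | tmul a b => simp [hε a a.2]
    rw [← ht, h2] at h1
    have h3 := congr(TensorProduct.lid k H $h1)
    rw [map_zero, TensorProduct.lid_tmul, one_smul] at h3
    exact hc0 h3.symm
  have hCmin : ∀ C' : Submodule k C, IsSubcoalgebra k C' → C' = ⊥ ∨ C' = ⊤ := by
    intro C' hC'
    have hmap : IsSubcoalgebra k (C'.map C.subtype) := by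
      rintro _ ⟨c, hc, rfl⟩
      obtain ⟨t, ht⟩ := hC' c hc
      let u : C' →ₗ[k] C'.map C.subtype := C.subtype.submoduleMap C'
      refine ⟨TensorProduct.map u u t, ?_⟩
      rw [Submodule.subtype_apply, ← hsub.map_subtype_comul, ← ht, ← LinearMap.comp_apply,
        ← LinearMap.comp_apply, ← TensorProduct.map_comp, ← TensorProduct.map_comp]
      rfl
    rcases hmin _ (Submodule.map_subtype_le C C') hmap with h | h
    · left
      rwa [(Submodule.map_injective_of_injective C.injective_subtype).eq_iff'
        (Submodule.map_bot _)] at h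
    · right
      rw [eq_top_iff]
      intro c _
      have : (c : H) ∈ C'.map C.subtype := by rw [h]; exact c.2
      obtain ⟨d, hd, hdc⟩ := this
      rwa [← C.injective_subtype hdc]
  let p : C →ₗc[k] K := (π : H →ₗc[k] K).comp hsub.incl
  have hpc : ∀ c : C, p c = π c := fun _ => rfl
  have key : ∀ c ∈ C, π c ∈ Submodule.span k {y : K | IsGroupLikeElem k y} := fun c hc =>
    coalgHom_apply_mem_span_groupLike hdim hCmin f n hn hfn hf1 p
      (fun c => by rw [hpc, hpc, hfc, map_mul, hπg, one_mul]) ⟨c, hc⟩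
  -- The span of the group-likes is a subalgebra, so it is enough to check the generators.
  have hspan : Submodule.span k {y : K | IsGroupLikeElem k y} =
      Subalgebra.toSubmodule (Algebra.adjoin k (groupLikeSubmonoid k K : Set K)) := by
    rw [Algebra.adjoin_eq_span, Submonoid.closure_eq]
    rfl
  intro h
  rw [hspan] at key ⊢
  have hle : Algebra.adjoin k (C : Set H) ≤
      (Algebra.adjoin k (groupLikeSubmonoid k K : Set K)).comap (π : H →ₐ[k] K) :=
    Algebra.adjoin_le fun c hc => key c hc
  exact hle (hgen ▸ Algebra.mem_top)
end
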